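/- arXiv:2202.06195 — 9 statements merged into one kernel-verified Lean document; each statement's English description precedes it below -/
import Mathlib

section
/- For every integer d ≥ 1 and every real y with 0 < y < π/4, the iterated sum over integers n₁ ≥ n₂ ≥ ⋯ ≥ n_d ≥ 0 of (4^{n₁} (sin y)^{2 n₁} / binom(2n₁, n₁)) / ((2n₁+1)(2n₂+1)⋯(2n_d+1)) equals (2 / sin(2y)) times the imaginary part of ∑_{n=1}^∞ (i · tan y)^n / n^d. -/
open Real Complex

namespace Aux

noncomputable def A (d n : ℕ) : ℝ :=
  ∑ m ∈ Finset.range (n+1), (-1:ℝ)^m * (n.choose m : ℝ) / (2*(m:ℝ)+1)^d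

noncomputable def H : ℕ → ℕ → ℝ
  | 0, N => 1 / (2*(N:ℝ)+1)
  | d+1, N => (∑ k ∈ Finset.range (N+1), H d k) / (2*(N:ℝ)+1)

noncomputable def w (n : ℕ) : ℝ := 4^n / ((2*n).choose n : ℝ)

lemma w_succ (n : ℕ) : w (n+1) * (2*(n:ℝ)+1) = 2*((n:ℝ)+1) * w n := by
  have h := Nat.succ_mul_centralBinom_succ n
  have h' : ((n:ℝ)+1) * ((2*(n+1)).choose (n+1) : ℝ) = 2*(2*(n:ℝ)+1) * ((2*n).choose n : ℝ) := by
    simp only [Nat.centralBinom] at h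
    exact_mod_cast h
  have p1 : ((2*n).choose n : ℝ) ≠ 0 := by
    exact_mod_cast (Nat.centralBinom_pos n).ne'
  have p2 : ((2*(n+1)).choose (n+1) : ℝ) ≠ 0 := by
    exact_mod_cast (Nat.centralBinom_pos (n+1)).ne'
  unfold w
  rw [div_mul_eq_mul_div, mul_div_assoc', div_eq_div_iff p2 p1, pow_succ]
  linear_combination (-2 * 4^n) * h'

lemma A_rec (d n : ℕ) :
    (2*(n:ℝ)+3) * A (d+1) (n+1) = 2*((n:ℝ)+1) * A (d+1) n + A d (n+1) := by
  have e : A (d+1) n = ∑ m ∈ Finset.range (n+1+1), (-1:ℝ)^m * (n.choose m : ℝ) / (2*(m:ℝ)+1)^(d+1) := by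
    rw [Finset.sum_range_succ]
    simp [A]
  rw [e]
  unfold A
  rw [Finset.mul_sum, Finset.mul_sum, ← Finset.sum_add_distrib]
  refine Finset.sum_congr rfl fun m hm => ?_
  have hm' : m ≤ n+1 := by simpa [Nat.lt_succ_iff] using hm
  have h : ((n:ℝ)+1) * (n.choose m : ℝ) = ((n+1).choose m : ℝ) * ((n:ℝ)+1-m) := by
    have h := Nat.choose_mul_succ_eq n m
    have h2 := congrArg (fun z : ℕ => (z:ℝ)) h
    simp only [Nat.cast_mul, Nat.cast_sub hm'] at h2
    push_cast at h2
    linarith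
  have p : (2*(m:ℝ)+1) ≠ 0 := by positivity
  rw [pow_succ]
  field_simp
  linear_combination (-2) * h

lemma A_zero_right (d : ℕ) : A d 0 = 1 := by simp [A]

lemma A_zero_left (n : ℕ) : A 0 (n+1) = 0 := by
  have h := Int.alternating_sum_range_choose_of_ne (n := n+1) (by omega)
  have h2 := congrArg (fun z : ℤ => (z:ℝ)) h
  simpa [A] using h2

lemma w_zero : w 0 = 1 := by simp [w]

lemma H_zero_right (d : ℕ) : H d 0 = 1 := by
  induction d with
  | zero => simp [H]
  | succ d ih => simp [H, ih]

lemma H_rec (d n : ℕ) : (2*(n:ℝ)+3) * H (d+1) (n+1) = (2*(n:ℝ)+1) * H (d+1) n + H d (n+1) := by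
  have p : (2*(n:ℝ)+1) ≠ 0 := by positivity
  have p' : (2*((n:ℝ)+1)+1) ≠ 0 := by positivity
  simp only [H]
  rw [Finset.sum_range_succ _ (n+1)]
  push_cast
  field_simp
  ring

lemma A_eq (d : ℕ) : ∀ n, A (d+1) n = w n * H d n := by
  induction d with
  | zero =>
    intro n
    induction n with
    | zero => simp [A_zero_right, w_zero, H_zero_right]
    | succ n ih =>
      have h := A_rec 0 n
      rw [A_zero_left, ih] at h
      have hw := w_succ n
      have p : (2*(n:ℝ)+1) ≠ 0 := by positivity
      have p' : (2*(n:ℝ)+3) ≠ 0 := by positivity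
      apply mul_left_cancel₀ p'
      rw [h]
      have p'' : (2*((n:ℝ)+1)+1) ≠ 0 := by positivity
      simp only [H]
      push_cast
      field_simp
      linear_combination (-(2*(n:ℝ)+3)) * hw
  | succ d ihd =>
    intro n
    induction n with
    | zero => simp [A_zero_right, w_zero, H_zero_right]
    | succ n ih =>
      have h := A_rec (d+1) n
      rw [ihd, ih] at h
      have hw := w_succ n
      have p' : (2*(n:ℝ)+3) ≠ 0 := by positivity
      apply mul_left_cancel₀ p'
      rw [h]
      linear_combination (-H (d+1) n) * hw - w (n+1) * H_rec d n

/-- antitone tuples with given head -/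
noncomputable def T : (d : ℕ) → ℕ → Finset (Fin (d+1) → ℕ)
  | 0, N => {fun _ => N}
  | d+1, N => (Finset.range (N+1)).biUnion fun k =>
      (T d k).image (fun f => (Fin.cons N f : Fin (d+2) → ℕ))

lemma mem_T (d : ℕ) : ∀ N (n : Fin (d+1) → ℕ), n ∈ T d N ↔ Antitone n ∧ n 0 = N := by
  induction d with
  | zero =>
    intro N n
    simp only [T, Finset.mem_singleton]
    constructor
    · rintro rfl
      exact ⟨fun _ _ _ => le_rfl, rfl⟩
    · rintro ⟨_, h⟩
      funext i
      have hi : i = 0 := Fin.ext (by omega)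
      rw [hi, h]
  | succ d ih =>
    intro N n
    simp only [T, Finset.mem_biUnion, Finset.mem_image, Finset.mem_range, ih]
    constructor
    · rintro ⟨k, hk, f, ⟨hf, h0⟩, rfl⟩
      refine ⟨?_, by simp⟩
      rw [Fin.antitone_iff_succ_le] at hf ⊢
      intro i
      refine Fin.cases ?_ (fun j => ?_) i
      · simp; omega
      · have := hf j
        rw [← Fin.succ_castSucc]
        simpa using this
    · rintro ⟨hn, h0⟩
      refine ⟨n 1, ?_, Fin.tail n, ⟨?_, rfl⟩, ?_⟩
      · have := hn (Fin.zero_le 1); omega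
      · intro a b hab
        exact hn (Fin.succ_le_succ_iff.2 hab)
      · rw [← h0]; exact Fin.cons_self_tail n

lemma sum_T (d : ℕ) : ∀ N, ∑ n ∈ T d N, ∏ j, (1 / (2*(n j : ℝ)+1)) = H d N := by
  induction d with
  | zero => intro N; simp [T, H]
  | succ d ih =>
    intro N
    rw [T, Finset.sum_biUnion]
    · simp only [H]
      rw [Finset.sum_div]
      refine Finset.sum_congr rfl fun k _ => ?_
      rw [Finset.sum_image (fun a _ b _ h => Fin.cons_right_injective _ h), ← ih k, Finset.sum_div]
      refine Finset.sum_congr rfl fun f _ => ?_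
      rw [Fin.prod_univ_succ]
      simp only [Fin.cons_zero, Fin.cons_succ]
      ring
    · intro a _ b _ hab
      refine Finset.disjoint_left.2 fun f hf hf' => hab ?_
      simp only [Finset.mem_image, mem_T] at hf hf'
      obtain ⟨g, ⟨_, hg⟩, rfl⟩ := hf
      obtain ⟨g', ⟨_, hg'⟩, h⟩ := hf'
      have := Fin.cons_right_injective _ h
      rw [← hg, ← hg', this]

noncomputable def eqv (d : ℕ) : (Σ N, T d N) ≃ {n : Fin (d+1) → ℕ // Antitone n} where
  toFun p := ⟨p.2.1, ((mem_T d _ _).1 p.2.2).1⟩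
  invFun n := ⟨n.1 0, ⟨n.1, (mem_T d _ _).2 ⟨n.2, rfl⟩⟩⟩
  left_inv := by
    rintro ⟨N, n, hn⟩
    obtain ⟨h, rfl⟩ := (mem_T d _ _).1 hn
    rfl
  right_inv := by
    rintro ⟨n, hn⟩
    rfl

lemma lhs_hasSum (d : ℕ) (x S : ℝ) (hx : 0 ≤ x) (hS : HasSum (fun N => x^N * A (d+1) N) S) :
    HasSum (fun n : {n : Fin (d+1) → ℕ // Antitone n} =>
      w (n.1 0) * x^(n.1 0) * ∏ j, (1 / (2*(n.1 j : ℝ)+1))) S := by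
  rw [← (eqv d).hasSum_iff]
  set f : (Σ N, T d N) → ℝ := (fun n : {n : Fin (d+1) → ℕ // Antitone n} =>
      w (n.1 0) * x^(n.1 0) * ∏ j, (1 / (2*(n.1 j : ℝ)+1))) ∘ (eqv d) with hf
  have hw : ∀ n, 0 ≤ w n := fun n => by unfold w; positivity
  have hf0 : 0 ≤ f := fun p => by
    simp only [hf, Function.comp, Pi.zero_apply]
    have := hw ((eqv d p).1 0)
    positivity
  have hfib : ∀ N, HasSum (fun c : T d N => f ⟨N, c⟩) (x^N * A (d+1) N) := by
    intro N
    have : x^N * A (d+1) N = ∑ c : T d N, f ⟨N, c⟩ := by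
      rw [A_eq, ← sum_T, ← Finset.sum_coe_sort (T d N), Finset.mul_sum, Finset.mul_sum]
      refine Finset.sum_congr rfl fun c _ => ?_
      have h0 := ((mem_T d _ _).1 c.2).2
      simp only [hf, Function.comp, eqv, Equiv.coe_fn_mk, h0]
      ring
    rw [this]
    exact hasSum_fintype _
  have hsum : Summable f := by
    rw [summable_sigma_of_nonneg hf0]
    refine ⟨fun N => (hfib N).summable, ?_⟩
    simp only [(hfib _).tsum_eq]
    exact hS.summable
  have := hsum.hasSum.sigma hfib
  rw [hS.unique this]
  exact hsum.hasSum

lemma double (d : ℕ) (x : ℝ) (hx : 0 ≤ x) (hx2 : x < 1/2) :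
    ∃ S, HasSum (fun N => x^N * A d N) S ∧
      HasSum (fun m : ℕ => (-1:ℝ)^m / (2*(m:ℝ)+1)^d * (x^m * (1/(1-x)^(m+1)))) S := by
  have hg : ∀ m : ℕ, HasSum (fun j : ℕ => x^m * (((j+m).choose m : ℝ) * x^j)) (x^m * (1/(1-x)^(m+1))) := by
    intro m
    have hn : ‖x‖ < 1 := by rw [Real.norm_of_nonneg hx]; linarith
    have h := hasSum_choose_mul_geometric_of_norm_lt_one m hn
    exact HasSum.mul_left (x^m) h
  let G : ℕ × ℕ → ℝ := fun p => x^p.1 * (((p.2+p.1).choose p.1 : ℝ) * x^p.2)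
  have hG0 : 0 ≤ G := fun p => by simp only [G, Pi.zero_apply]; positivity
  have hG : Summable G := by
    rw [summable_prod_of_nonneg hG0]
    refine ⟨fun m => (hg m).summable, ?_⟩
    have : ∀ m : ℕ, ∑' j, G (m, j) = (1/(1-x)) * (x/(1-x))^m := by
      intro m
      rw [(hg m).tsum_eq, div_pow, pow_succ]
      have : (1-x) ≠ 0 := by linarith
      field_simp
    simp only [this]
    refine (summable_geometric_of_lt_one (div_nonneg hx (by linarith)) ?_).mul_left _
    rw [div_lt_one (by linarith)]; linarith
  let F : ℕ × ℕ → ℝ := fun p => (-1:ℝ)^p.1 / (2*(p.1:ℝ)+1)^d * G p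
  have hF : Summable F := by
    refine Summable.of_norm_bounded hG fun p => ?_
    simp only [F, norm_mul, norm_div, norm_pow, norm_neg, norm_one, one_pow]
    rw [Real.norm_of_nonneg (hG0 p)]
    refine mul_le_of_le_one_left (hG0 p) ?_
    have : (0:ℝ) ≤ p.1 := by positivity
    rw [Real.norm_of_nonneg (by positivity)]
    rw [div_le_one (by positivity)]
    exact one_le_pow₀ (by linarith)
  refine ⟨∑' p, F p, ?_, hF.hasSum.prod_fiberwise fun m => (hg m).mul_left _⟩
  have h1 := (Finset.HasAntidiagonal.sigmaAntidiagonalEquivProd (A := ℕ)).hasSum_iff.2 hF.hasSum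
  refine h1.sigma fun N => ?_
  have : x^N * A d N = ∑ c : Finset.HasAntidiagonal.antidiagonal N, F c.1 := by
    rw [Finset.sum_coe_sort (Finset.HasAntidiagonal.antidiagonal N) F, Finset.Nat.sum_antidiagonal_eq_sum_range_succ_mk,
      A, Finset.mul_sum]
    refine Finset.sum_congr rfl fun m hm => ?_
    have hm' : m ≤ N := by simpa [Nat.lt_succ_iff] using hm
    simp only [F, G]
    rw [Nat.sub_add_cancel hm']
    have : x^N = x^m * x^(N-m) := by rw [← pow_add]; congr 1; omega
    rw [this]; ring
  rw [this]
  exact hasSum_fintype _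

lemma rhs (d : ℕ) (t S : ℝ) (ht : |t| < 1)
    (hS : HasSum (fun m : ℕ => (-1:ℝ)^m / (2*(m:ℝ)+1)^d * t^(2*m+1)) S) :
    (∑' n : ℕ, (Complex.I * (t : ℂ)) ^ (n + 1) / ((n : ℂ) + 1) ^ d).im = S := by
  have hs : Summable (fun n : ℕ => (Complex.I * (t : ℂ)) ^ (n + 1) / ((n : ℂ) + 1) ^ d) := by
    refine Summable.of_norm_bounded (g := fun n : ℕ => |t|^(n+1)) ?_ fun n => ?_
    · exact (summable_nat_add_iff 1).2 (summable_geometric_of_lt_one (abs_nonneg t) ht)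
    · rw [norm_div, norm_pow, norm_pow, norm_mul, Complex.norm_I, one_mul, Complex.norm_real,
        Real.norm_eq_abs]
      have : ‖(n:ℂ)+1‖ = (n:ℝ)+1 := by
        rw [← Nat.cast_succ, Complex.norm_natCast]; simp
      rw [this]
      refine div_le_self (by positivity) (one_le_pow₀ ?_)
      have : (0:ℝ) ≤ n := by positivity
      linarith
  have h1 := (Complex.hasSum_im hs.hasSum)
  have key : ∀ n : ℕ, ((Complex.I * (t : ℂ)) ^ (n + 1) / ((n : ℂ) + 1) ^ d).im
      = (Complex.I^(n+1)).im * (t^(n+1) / ((n:ℝ)+1)^d) := by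
    intro n
    have : (Complex.I * (t : ℂ)) ^ (n + 1) / ((n : ℂ) + 1) ^ d
       = Complex.I^(n+1) * ((t^(n+1) / ((n:ℝ)+1)^d : ℝ) : ℂ) := by
      push_cast; rw [mul_pow]; ring
    rw [this, Complex.im_mul_ofReal]
  have hinj : Function.Injective (fun m : ℕ => 2*m) := fun a b h => by simpa using h
  rw [← hinj.hasSum_iff] at h1
  · refine h1.unique ?_
    convert hS using 1
    funext m
    simp only [Function.comp, key]
    rw [pow_succ Complex.I, pow_mul, Complex.I_sq]
    have : ((-1:ℂ)^m * Complex.I).im = (-1:ℝ)^m := by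
      have : ((-1:ℂ)^m) = (((-1:ℝ)^m : ℝ) : ℂ) := by push_cast; rfl
      rw [this, Complex.im_ofReal_mul]; simp
    rw [this]; push_cast; ring
  · intro n hn
    rw [key]
    have ho : Odd n := by
      rw [← Nat.not_even_iff_odd]
      rintro ⟨k, hk⟩
      exact hn ⟨k, by simp; omega⟩
    obtain ⟨k, rfl⟩ := ho
    have : Complex.I^(2*k+1+1) = (((-1:ℝ)^(k+1) : ℝ) : ℂ) := by
      rw [show 2*k+1+1 = 2*(k+1) by ring, pow_mul, Complex.I_sq]; push_cast; rfl
    rw [this, Complex.ofReal_im, zero_mul]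

end Aux

/-- Proposition `pro-gtIds` (first identity), specialized form:
for `d ≥ 1` and `0 < y < π/4`, the iterated sum over `n₁ ≥ ⋯ ≥ n_d ≥ 0` of
`4^{n₁} (sin y)^{2n₁} / (binom(2n₁,n₁) (2n₁+1)⋯(2n_d+1))`
equals `(2/sin(2y)) · Im Li_d(i tan y)`. -/
theorem stmt0 (d : ℕ) (hd : 1 ≤ d) (y : ℝ) (hy0 : 0 < y) (hy : y < π / 4) :
    (∑' n : {n : Fin d → ℕ // Antitone n},
      ((4 : ℝ) ^ (n.1 ⟨0, hd⟩) * Real.sin y ^ (2 * n.1 ⟨0, hd⟩) /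
        (Nat.choose (2 * n.1 ⟨0, hd⟩) (n.1 ⟨0, hd⟩) : ℝ)) /
      ∏ j : Fin d, (2 * (n.1 j : ℝ) + 1)) =
    (2 / Real.sin (2 * y)) *
      (∑' n : ℕ, (Complex.I * (Real.tan y : ℂ)) ^ (n + 1) / ((n : ℂ) + 1) ^ d).im := by
  obtain ⟨d, rfl⟩ : ∃ e, d = e + 1 := ⟨d - 1, by omega⟩
  have hpi := Real.pi_pos
  have hs : 0 < Real.sin y := Real.sin_pos_of_pos_of_lt_pi hy0 (by linarith)
  have hc : 0 < Real.cos y := Real.cos_pos_of_mem_Ioo ⟨by linarith, by linarith⟩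
  have hc2 : 0 < Real.cos (2*y) := Real.cos_pos_of_mem_Ioo ⟨by linarith, by linarith⟩
  have hsc := Real.sin_sq_add_cos_sq y
  have hx2 : Real.sin y ^ 2 < 1/2 := by
    rw [Real.cos_two_mul] at hc2; nlinarith
  obtain ⟨S, h1, h2⟩ := Aux.double (d+1) (Real.sin y ^ 2) (by positivity) hx2
  have hL := Aux.lhs_hasSum d (Real.sin y ^ 2) S (by positivity) h1
  have ht : |Real.tan y| < 1 := by
    rw [Real.tan_eq_sin_div_cos, abs_of_pos (by positivity), div_lt_one hc]
    nlinarith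
  have hcs : 1 - Real.sin y ^ 2 = Real.cos y ^ 2 := by linarith
  have hR : HasSum (fun m : ℕ => (-1:ℝ)^m / (2*(m:ℝ)+1)^(d+1) * Real.tan y^(2*m+1))
      (Real.sin y * Real.cos y * S) := by
    have h3 := HasSum.mul_left (Real.sin y * Real.cos y) h2
    refine HasSum.congr_fun h3 fun m => ?_
    rw [hcs, Real.tan_eq_sin_div_cos, div_pow]
    have := hs.ne'
    have := hc.ne'
    field_simp
    ring
  rw [Aux.rhs (d+1) (Real.tan y) _ ht hR, Real.sin_two_mul]
  have hS : 2 / (2 * Real.sin y * Real.cos y) * (Real.sin y * Real.cos y * S) = S := by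
    have := hs.ne'
    have := hc.ne'
    field_simp
  rw [hS, ← hL.tsum_eq]
  refine tsum_congr fun n => ?_
  have e : (⟨0, hd⟩ : Fin (d+1)) = 0 := rfl
  rw [e, Aux.w, Finset.prod_div_distrib, Finset.prod_const_one, pow_mul]
  ring
end

section
/- For every integer d ≥ 1 and every real y with 0 < y < π/2, the iterated sum over integers n₁ ≥ n₂ ≥ ⋯ ≥ n_d ≥ 0 of (4^{n₁} (sin y)^{2 n₁} / binom(2n₁, n₁)) / ((2n₁+1)²(2n₂+1)²⋯(2n_d+1)²) equals (2 / sin y) times the imaginary part of ∑_{n=1}^∞ (i · tan(y/2))^n / n^{2d}. -/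
open Real Complex

noncomputable def PP (b : ℕ → ℝ) (x : ℝ) : ℝ := ∑' n, b n * x ^ (2 * n + 1)

def Good (b : ℕ → ℝ) : Prop := ∃ (C : ℝ) (m : ℕ), 0 ≤ C ∧ ∀ n, |b n| ≤ C * (2 * (n:ℝ) + 1) ^ m

lemma Good.mul {b c : ℕ → ℝ} (hb : Good b) (hc : Good c) : Good (fun n => b n * c n) := by
  obtain ⟨C, m, hC, h⟩ := hb
  obtain ⟨D, k, hD, h'⟩ := hc
  refine ⟨C * D, m + k, by positivity, fun n => ?_⟩
  rw [abs_mul]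
  calc |b n| * |c n| ≤ (C * (2 * (n:ℝ) + 1) ^ m) * (D * (2 * (n:ℝ) + 1) ^ k) :=
        mul_le_mul (h n) (h' n) (abs_nonneg _) (by positivity)
    _ = _ := by ring

lemma good_lin : Good (fun n => 2 * (n:ℝ) + 1) :=
  ⟨1, 1, by norm_num, fun n => by rw [abs_of_nonneg (by positivity)]; simp⟩

lemma good_of_le_one {b : ℕ → ℝ} (h : ∀ n, |b n| ≤ 1) : Good b :=
  ⟨1, 0, by norm_num, fun n => by simpa using h n⟩

lemma summable_basic (C : ℝ) (m : ℕ) (r : ℝ) (h0 : 0 ≤ r) (h1 : r < 1) :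
    Summable (fun n : ℕ => C * (2 * (n:ℝ) + 1) ^ m * r ^ (2 * n + 1)) := by
  have h := summable_pow_mul_geometric_of_norm_lt_one (R := ℝ) m (r := r)
    (by rw [Real.norm_eq_abs, abs_of_nonneg h0]; exact h1)
  have h2 := h.comp_injective (i := fun n : ℕ => 2 * n + 1) (fun a b hab => by simpa using hab)
  refine (h2.mul_left C).congr fun n => ?_
  simp [mul_assoc]

lemma Good.summable {b : ℕ → ℝ} (hb : Good b) {x : ℝ} (hx : |x| < 1) :
    Summable (fun n => b n * x ^ (2 * n + 1)) := by
  obtain ⟨C, m, hC, h⟩ := hb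
  refine Summable.of_norm_bounded (summable_basic C m |x| (abs_nonneg _) hx) fun n => ?_
  rw [norm_mul, norm_pow]
  exact mul_le_mul_of_nonneg_right (h n) (by positivity)

lemma Good.hasDerivAt {b : ℕ → ℝ} (hb : Good b) {x : ℝ} (hx : |x| < 1) :
    HasDerivAt (PP b) (∑' n, b n * ((2 * (n:ℝ) + 1) * x ^ (2 * n))) x := by
  obtain ⟨r, hxr, hr⟩ := exists_between hx
  have hr0 : 0 < r := (abs_nonneg x).trans_lt hxr
  obtain ⟨C, m, hC, h⟩ := id hb
  have hs : Summable (fun n : ℕ => C * (2 * (n:ℝ) + 1) ^ (m+1) * r ^ (2 * n)) := by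
    refine ((summable_basic C (m+1) r hr0.le hr).mul_right r⁻¹).congr fun n => ?_
    rw [pow_succ r]; field_simp
  refine hasDerivAt_tsum_of_isPreconnected (t := Metric.ball 0 r) hs Metric.isOpen_ball
    (convex_ball _ _).isPreconnected (g := fun n x => b n * x ^ (2 * n + 1))
    (g' := fun n x => b n * ((2 * (n:ℝ) + 1) * x ^ (2 * n))) ?_ ?_ (y₀ := x) ?_ ?_ ?_
  · intro n z _
    have := (hasDerivAt_pow (2 * n + 1) z).const_mul (b n)
    simpa using this
  · intro n z hz
    have hz' : |z| ≤ r := by simpa using (Metric.mem_ball.1 hz).le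
    have h3 : |2 * (n:ℝ) + 1| = 2 * (n:ℝ) + 1 := abs_of_nonneg (by positivity)
    rw [norm_mul, norm_mul, norm_pow, Real.norm_eq_abs, Real.norm_eq_abs, Real.norm_eq_abs, h3]
    calc |b n| * ((2 * (n:ℝ) + 1) * |z| ^ (2 * n))
        ≤ (C * (2 * (n:ℝ) + 1) ^ m) * ((2 * (n:ℝ) + 1) * r ^ (2 * n)) := by
          gcongr; exact h n
      _ = _ := by ring
  · simpa using hxr
  · exact hb.summable hx
  · simpa using hxr

lemma Good.hasDerivAt' {b : ℕ → ℝ} (hb : Good b) {x : ℝ} (hx : |x| < 1) (hx0 : x ≠ 0) :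
    HasDerivAt (PP b) (PP (fun n => b n * (2 * (n:ℝ) + 1)) x / x) x := by
  convert hb.hasDerivAt hx using 1
  rw [PP, ← tsum_div_const]
  congr 1; ext n
  rw [pow_succ]; field_simp

lemma PP_zero (b : ℕ → ℝ) : PP b 0 = 0 := by simp [PP]

/-- uniqueness -/
lemma uniq (f g h : ℝ → ℝ) (h0 : f 0 = g 0) (hf : ContinuousAt f 0) (hg : ContinuousAt g 0)
    (hf' : ∀ y, 0 < y → y < π/2 → HasDerivAt f (h y) y)
    (hg' : ∀ y, 0 < y → y < π/2 → HasDerivAt g (h y) y) :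
    ∀ y, 0 < y → y < π/2 → f y = g y := by
  intro y hy0 hy
  obtain ⟨c, hc, hc'⟩ := exists_hasDerivAt_eq_slope (fun x => f x - g x) (fun _ => 0) hy0 (by
      intro x hx
      apply ContinuousAt.continuousWithinAt
      rcases hx.1.eq_or_lt with h | h
      · subst h; exact hf.sub hg
      · exact ((hf' x h (hx.2.trans_lt hy)).sub (hg' x h (hx.2.trans_lt hy))).continuousAt)
      (by
        intro x hx
        have := (hf' x hx.1 (hx.2.trans hy)).sub (hg' x hx.1 (hx.2.trans hy))
        rw [sub_self] at this
        exact this)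
  have : y - 0 ≠ 0 := by simpa using hy0.ne'
  field_simp at hc'
  linarith

noncomputable def bet (j : ℕ) (n : ℕ) : ℝ := (-1) ^ n / (2 * (n:ℝ) + 1) ^ j

lemma good_bet (j : ℕ) : Good (bet j) := by
  apply good_of_le_one
  intro n
  rw [bet, abs_div, abs_pow]
  simp only [abs_neg, abs_one, one_pow]
  rw [abs_of_nonneg (by positivity)]
  apply div_le_one_of_le₀ _ (by positivity)
  exact one_le_pow₀ (by linarith [Nat.cast_nonneg (α := ℝ) n])

lemma tan_lt {y : ℝ} (h0 : 0 ≤ y) (h1 : y < π/2) : |Real.tan (y/2)| < 1 := by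
  rw [abs_of_nonneg (Real.tan_nonneg_of_nonneg_of_le_pi_div_two (by linarith) (by linarith)),
    ← Real.tan_pi_div_four]
  exact Real.tan_lt_tan_of_lt_of_lt_pi_div_two (by linarith [Real.pi_pos]) (by linarith) (by linarith)

noncomputable def LL (j : ℕ) (y : ℝ) : ℝ := PP (bet j) (Real.tan (y/2))

lemma LL_zero (j : ℕ) : LL j 0 = 0 := by simp [LL, PP_zero]

lemma LL_cont (j : ℕ) : ContinuousAt (LL j) 0 := by
  have h1 : ContinuousAt (fun y : ℝ => Real.tan (y/2)) 0 := by
    have : ContinuousAt Real.tan ((0:ℝ)/2) := Real.continuousAt_tan.2 (by simp)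
    exact ContinuousAt.comp (f := fun y : ℝ => y/2) this (by fun_prop)
  have h2 := ((good_bet j).hasDerivAt (x := Real.tan (0/2)) (by simp)).continuousAt
  exact ContinuousAt.comp (f := fun y : ℝ => Real.tan (y/2)) h2 h1

lemma LL_deriv (j : ℕ) (y : ℝ) (h0 : 0 < y) (h1 : y < π/2) :
    HasDerivAt (LL (j+1)) (LL j y / Real.sin y) y := by
  have hc : 0 < Real.cos (y/2) := Real.cos_pos_of_mem_Ioo ⟨by linarith, by linarith⟩
  have hs : 0 < Real.sin (y/2) := Real.sin_pos_of_pos_of_lt_pi (by linarith) (by linarith)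
  have ht : HasDerivAt (fun y : ℝ => Real.tan (y/2)) (1 / Real.cos (y/2)^2 * (1/2)) y := by
    have := (Real.hasDerivAt_tan hc.ne').comp y ((hasDerivAt_id y).div_const 2)
    exact this
  have htn : Real.tan (y/2) ≠ 0 := by
    rw [Real.tan_eq_sin_div_cos]; positivity
  have := ((good_bet (j+1)).hasDerivAt' (tan_lt h0.le h1) htn).comp y ht
  refine HasDerivAt.congr_deriv (f := LL (j+1)) this ?_
  have e : (fun n => bet (j+1) n * (2 * (n:ℝ) + 1)) = bet j := by
    ext n; rw [bet, bet, pow_succ]; field_simp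
  rw [e, LL]
  have : Real.sin y = 2 * Real.sin (y/2) * Real.cos (y/2) := by
    rw [← Real.sin_two_mul]; ring_nf
  rw [this]
  have e3 : Real.tan (y/2) = Real.sin (y/2) / Real.cos (y/2) := Real.tan_eq_sin_div_cos _
  generalize PP (bet j) (Real.tan (y/2)) = Z
  rw [e3]
  field_simp

lemma LL_base (y : ℝ) (h0 : 0 < y) (h1 : y < π/2) : 2 * LL 0 y = Real.sin y := by
  have hc : 0 < Real.cos (y/2) := Real.cos_pos_of_mem_Ioo ⟨by linarith, by linarith⟩
  have ht := tan_lt h0.le h1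
  have : LL 0 y = Real.tan (y/2) / (1 + Real.tan (y/2)^2) := by
    have hg := (hasSum_geometric_of_abs_lt_one (r := -(Real.tan (y/2))^2) (by
      rw [abs_neg, abs_pow]; exact pow_lt_one₀ (abs_nonneg _) ht (by norm_num))).mul_left (Real.tan (y/2))
    rw [LL, PP, div_eq_mul_inv (Real.tan _), ← sub_neg_eq_add 1, ← hg.tsum_eq]
    congr 1; ext n
    rw [bet, neg_pow, pow_succ, pow_mul]; ring
  have h3 : Real.sin y = 2 * Real.sin (y/2) * Real.cos (y/2) := by
    rw [← Real.sin_two_mul]; ring_nf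
  rw [this, h3, Real.tan_eq_sin_div_cos]
  have := Real.sin_sq_add_cos_sq (y/2)
  have h5 : 1 + (Real.sin (y/2) / Real.cos (y/2))^2 = 1 / Real.cos (y/2)^2 := by
    field_simp; linarith
  rw [h5]; field_simp

noncomputable def aa (n : ℕ) : ℝ := 4 ^ n / (Nat.choose (2 * n) n : ℝ)

lemma aa_nonneg (n : ℕ) : 0 ≤ aa n := by unfold aa; positivity

lemma aa_succ (n : ℕ) : aa (n+1) * (2 * (n:ℝ) + 1) = aa n * (2 * n + 2) := by
  have h := Nat.succ_mul_centralBinom_succ n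
  have p1 : (0:ℝ) < Nat.centralBinom n := by exact_mod_cast Nat.centralBinom_pos n
  have p2 : (0:ℝ) < Nat.centralBinom (n+1) := by exact_mod_cast Nat.centralBinom_pos (n+1)
  have h' : ((n:ℝ) + 1) * Nat.centralBinom (n+1) = 2 * (2 * n + 1) * Nat.centralBinom n := by
    exact_mod_cast h
  unfold aa
  rw [← Nat.centralBinom_eq_two_mul_choose, ← Nat.centralBinom_eq_two_mul_choose, pow_succ]
  field_simp
  linear_combination (-2) * h'

lemma good_aa : Good aa := by
  refine ⟨1, 1, by norm_num, fun n => ?_⟩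
  rw [abs_of_nonneg (aa_nonneg n), aa, ← Nat.centralBinom_eq_two_mul_choose]
  have p1 : (0:ℝ) < Nat.centralBinom n := by exact_mod_cast Nat.centralBinom_pos n
  rw [div_le_iff₀ p1]
  rcases Nat.eq_zero_or_pos n with h | h
  · subst h; simp
  · have : (4:ℝ)^n ≤ 2 * n * Nat.centralBinom n := by
      exact_mod_cast Nat.four_pow_le_two_mul_self_mul_centralBinom n h
    nlinarith

noncomputable def TT : ℕ → ℕ → ℝ
  | 0, n => if n = 0 then 1 else 0
  | d+1, n => (∑ m ∈ Finset.range (n+1), TT d m) / (2 * (n:ℝ) + 1)^2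

lemma TT_nonneg (d n : ℕ) : 0 ≤ TT d n := by
  induction d generalizing n with
  | zero => rw [TT]; split_ifs <;> norm_num
  | succ d ih => rw [TT]; exact div_nonneg (Finset.sum_nonneg fun m _ => ih m) (by positivity)

lemma TT_le (d n : ℕ) : TT d n ≤ 1 := by
  induction d generalizing n with
  | zero => rw [TT]; split_ifs <;> norm_num
  | succ d ih =>
    rw [TT]
    apply div_le_one_of_le₀ _ (by positivity)
    calc (∑ m ∈ Finset.range (n+1), TT d m) ≤ ∑ m ∈ Finset.range (n+1), (1:ℝ) :=
          Finset.sum_le_sum fun m _ => ih m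
      _ = n + 1 := by simp
      _ ≤ _ := by nlinarith [Nat.cast_nonneg (α := ℝ) n]

lemma good_TT (d : ℕ) : Good (TT d) := good_of_le_one fun n => by
  rw [abs_of_nonneg (TT_nonneg d n)]; exact TT_le d n

noncomputable def FF (d : ℕ) (y : ℝ) : ℝ := PP (fun n => aa n * TT d n) (Real.sin y)
noncomputable def HH (d : ℕ) (y : ℝ) : ℝ :=
  Real.cos y * PP (fun n => aa n * TT d n * (2 * (n:ℝ) + 1)) (Real.sin y)

lemma sin_lt {y : ℝ} (h0 : 0 ≤ y) (h1 : y < π/2) : |Real.sin y| < 1 := by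
  rw [abs_of_nonneg (Real.sin_nonneg_of_nonneg_of_le_pi h0 (by linarith)), ← Real.sin_pi_div_two]
  exact Real.sin_lt_sin_of_lt_of_le_pi_div_two (by linarith) le_rfl h1

lemma PPsin_cont {b : ℕ → ℝ} (hb : Good b) : ContinuousAt (fun y => PP b (Real.sin y)) 0 := by
  have h2 := (hb.hasDerivAt (x := Real.sin 0) (by simp)).continuousAt
  exact ContinuousAt.comp (f := Real.sin) h2 Real.continuous_sin.continuousAt

lemma PPsin_deriv {b : ℕ → ℝ} (hb : Good b) (y : ℝ) (h0 : 0 < y) (h1 : y < π/2) :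
    HasDerivAt (fun y => PP b (Real.sin y))
      (PP (fun n => b n * (2 * (n:ℝ) + 1)) (Real.sin y) / Real.sin y * Real.cos y) y := by
  have hs : 0 < Real.sin y := Real.sin_pos_of_pos_of_lt_pi h0 (by linarith)
  exact (hb.hasDerivAt' (sin_lt h0.le h1) hs.ne').comp y (Real.hasDerivAt_sin y)

lemma FF_deriv (d : ℕ) (y : ℝ) (h0 : 0 < y) (h1 : y < π/2) :
    HasDerivAt (FF d) (HH d y / Real.sin y) y := by
  refine HasDerivAt.congr_deriv (f := FF d)
    (PPsin_deriv (good_aa.mul (good_TT d)) y h0 h1) ?_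
  rw [HH]; ring

lemma key (d : ℕ) (x : ℝ) (hx : |x| < 1) :
    (1 - x^2) * PP (fun n => aa n * TT (d+1) n * (2 * (n:ℝ) + 1) * (2 * (n:ℝ) + 1)) x
      - x^2 * PP (fun n => aa n * TT (d+1) n * (2 * (n:ℝ) + 1)) x = PP (fun n => aa n * TT d n) x := by
  have g0 := good_aa.mul (good_TT (d+1))
  have g1 := g0.mul good_lin
  have g2 := g1.mul good_lin
  have g3 := good_aa.mul (good_TT d)
  have s1 := g1.summable hx
  have s2 := g2.summable hx
  have s3 := g3.summable hx
  have e : (1 - x^2) * PP (fun n => aa n * TT (d+1) n * (2 * (n:ℝ) + 1) * (2 * (n:ℝ) + 1)) x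
      - x^2 * PP (fun n => aa n * TT (d+1) n * (2 * (n:ℝ) + 1)) x
    = PP (fun n => aa n * TT (d+1) n * (2 * (n:ℝ) + 1) * (2 * (n:ℝ) + 1)) x
      - x^2 * (PP (fun n => aa n * TT (d+1) n * (2 * (n:ℝ) + 1) * (2 * (n:ℝ) + 1)) x +
       PP (fun n => aa n * TT (d+1) n * (2 * (n:ℝ) + 1)) x) := by ring
  rw [e]
  unfold PP
  rw [← s2.tsum_add s1, ← tsum_mul_left, s2.tsum_eq_zero_add, s3.tsum_eq_zero_add,
    add_sub_assoc, ← Summable.tsum_sub ((summable_nat_add_iff 1).2 s2) ((s2.add s1).mul_left _)]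
  congr 1
  · simp [TT]
  · congr 1; ext n
    have h1 : ∀ n, TT (d+1) n * (2 * (n:ℝ)+1)^2 = ∑ m ∈ Finset.range (n+1), TT d m := by
      intro n; rw [TT]; field_simp
    have h2 := h1 (n+1)
    rw [Finset.sum_range_succ, ← h1 n] at h2
    have h3 := aa_succ n
    push_cast at h2 ⊢
    linear_combination aa (n+1) * x^(2*(n+1)+1) * h2 +
      x^(2*(n+1)+1) * TT (d+1) n * (2 * (n:ℝ)+1) * h3

lemma HH_deriv (d : ℕ) (y : ℝ) (h0 : 0 < y) (h1 : y < π/2) :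
    HasDerivAt (HH (d+1)) (FF d y / Real.sin y) y := by
  have hs : 0 < Real.sin y := Real.sin_pos_of_pos_of_lt_pi h0 (by linarith)
  have := (Real.hasDerivAt_cos y).mul
    (PPsin_deriv ((good_aa.mul (good_TT (d+1))).mul good_lin) y h0 h1)
  refine HasDerivAt.congr_deriv (f := HH (d+1)) this ?_
  rw [FF, ← key d _ (sin_lt h0.le h1)]
  have hc := Real.sin_sq_add_cos_sq y
  field_simp
  rw [← hc]; ring

lemma FF_zero (d : ℕ) : FF d 0 = 0 := by simp [FF, PP_zero]
lemma HH_zero (d : ℕ) : HH d 0 = 0 := by simp [HH, PP_zero]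

lemma FF_eq (d : ℕ) : ∀ y, 0 < y → y < π/2 → FF d y = 2 * LL (2*d) y := by
  induction d with
  | zero =>
    intro y h0 h1
    rw [LL_base y h0 h1, FF, PP, tsum_eq_single 0]
    · simp [TT, aa]
    · intro n hn; simp [TT, hn]
  | succ d ih =>
    have hH : ∀ y, 0 < y → y < π/2 → HH (d+1) y = 2 * LL (2*d+1) y := by
      refine uniq _ _ (fun y => FF d y / Real.sin y) ?_ ?_ ?_ (HH_deriv d) ?_
      · simp [HH_zero, LL_zero]
      · exact Real.continuous_cos.continuousAt.mul
          (PPsin_cont ((good_aa.mul (good_TT (d+1))).mul good_lin))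
      · exact continuousAt_const.mul (LL_cont _)
      · intro y h0 h1
        refine ((LL_deriv (2*d) y h0 h1).const_mul 2).congr_deriv ?_
        rw [ih y h0 h1]; ring
    refine uniq _ _ (fun y => HH (d+1) y / Real.sin y) ?_ ?_ ?_ (FF_deriv (d+1)) ?_
    · simp [FF_zero, LL_zero]
    · exact PPsin_cont (good_aa.mul (good_TT (d+1)))
    · exact continuousAt_const.mul (LL_cont _)
    · intro y h0 h1
      refine ((LL_deriv (2*d+1) y h0 h1).const_mul 2).congr_deriv ?_
      rw [hH y h0 h1]; ring

lemma im_side (d : ℕ) (hd : 1 ≤ d) (t : ℝ) (ht : |t| < 1) :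
    (∑' n : ℕ, (Complex.I * (t : ℂ)) ^ (n + 1) / ((n : ℂ) + 1) ^ (2 * d)).im = PP (bet (2*d)) t := by
  have hs : Summable (fun n : ℕ => (Complex.I * (t : ℂ)) ^ (n + 1) / ((n : ℂ) + 1) ^ (2 * d)) := by
    refine Summable.of_norm_bounded
      ((summable_nat_add_iff 1).2 (summable_geometric_of_lt_one (abs_nonneg t) ht)) fun n => ?_
    rw [norm_div, norm_pow, norm_mul, Complex.norm_I, one_mul, Complex.norm_real, norm_pow,
      Real.norm_eq_abs]
    apply div_le_self (by positivity)
    apply one_le_pow₀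
    have : ((n:ℂ) + 1) = ((n+1 : ℕ) : ℂ) := by push_cast; rfl
    rw [this, Complex.norm_natCast]
    simp
  rw [Complex.im_tsum hs]
  have hi : Summable (fun n : ℕ => ((Complex.I * (t : ℂ)) ^ (n + 1) / ((n : ℂ) + 1) ^ (2 * d)).im) :=
    (Complex.hasSum_im hs.hasSum).summable
  have ev : ∀ k : ℕ, ((Complex.I * (t : ℂ)) ^ (2 * k + 1) / (((2 * k : ℕ) : ℂ) + 1) ^ (2 * d)).im
      = bet (2*d) k * t ^ (2*k+1) := by
    intro k
    have : (Complex.I * (t : ℂ)) ^ (2 * k + 1) / (((2 * k : ℕ) : ℂ) + 1) ^ (2 * d)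
      = ((bet (2*d) k * t ^ (2*k+1) : ℝ) : ℂ) * Complex.I := by
      rw [mul_pow, pow_succ Complex.I, pow_mul Complex.I, Complex.I_sq, bet]
      push_cast; ring
    rw [this, Complex.im_ofReal_mul, Complex.I_im, mul_one]
  have od : ∀ k : ℕ, ((Complex.I * (t : ℂ)) ^ (2 * k + 1 + 1) / (((2 * k + 1 : ℕ) : ℂ) + 1) ^ (2 * d)).im
      = 0 := by
    intro k
    have : (Complex.I * (t : ℂ)) ^ (2 * k + 1 + 1) / (((2 * k + 1 : ℕ) : ℂ) + 1) ^ (2 * d)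
      = (((-1)^(k+1) * t ^ (2*k+1+1) / (2*k+1+1)^(2*d) : ℝ) : ℂ) := by
      rw [mul_pow, show 2*k+1+1 = 2*(k+1) by ring, pow_mul Complex.I, Complex.I_sq]
      push_cast; ring
    rw [this, Complex.ofReal_im]
  clear hs
  generalize hF : (fun n : ℕ => ((Complex.I * (t : ℂ)) ^ (n + 1) / ((n : ℂ) + 1) ^ (2 * d)).im) = F at hi ⊢
  have ev' : ∀ k, F (2 * k) = bet (2*d) k * t ^ (2*k+1) := fun k => by rw [← hF]; exact ev k
  have od' : ∀ k, F (2 * k + 1) = 0 := fun k => by rw [← hF]; exact od k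
  have inj1 : Function.Injective (fun k : ℕ => 2 * k) := fun a b h => by simpa using h
  have inj2 : Function.Injective (fun k : ℕ => 2 * k + 1) := fun a b h => by simpa using h
  rw [← tsum_even_add_odd (f := F) (hi.comp_injective inj1) (hi.comp_injective inj2)]
  simp_rw [ev', od']
  simp [PP]

open scoped ENNReal

noncomputable def ww (n : ℕ) : ℝ≥0∞ := ENNReal.ofReal (1 / (2 * (n:ℝ) + 1)^2)

lemma antitone_cons (d k : ℕ) (f : Fin (d+1) → ℕ) :
    Antitone (Fin.cons k f : Fin (d+2) → ℕ) ↔ f 0 ≤ k ∧ Antitone f := by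
  rw [Fin.antitone_iff_succ_le, Fin.antitone_iff_succ_le, Fin.forall_fin_succ]
  simp

open Classical in
lemma comb (d : ℕ) (g : ℕ → ℝ≥0∞) :
    (∑' n : Fin (d+1) → ℕ, if Antitone n then g (n 0) * ∏ j, ww (n j) else 0)
      = ∑' k, g k * ENNReal.ofReal (TT (d+1) k) := by
  induction d generalizing g with
  | zero =>
    rw [← (Equiv.funUnique (Fin 1) ℕ).symm.tsum_eq]
    congr 1; ext k
    have hsub : Subsingleton (Fin (0+1)) := inferInstanceAs (Subsingleton (Fin 1))
    rw [if_pos (Subsingleton.antitone _)]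
    simp [ww, TT]
  | succ d ih =>
    rw [← (Fin.consEquiv (fun _ : Fin (d+2) => ℕ)).tsum_eq, ENNReal.summable.tsum_prod' (fun _ => ENNReal.summable),
      ENNReal.tsum_comm]
    have h1 : ∀ f : Fin (d+1) → ℕ, (∑' k : ℕ,
        if Antitone (Fin.consEquiv (fun _ : Fin (d+2) => ℕ) (k, f)) then
          g (Fin.consEquiv (fun _ : Fin (d+2) => ℕ) (k, f) 0) *
            ∏ j, ww (Fin.consEquiv (fun _ : Fin (d+2) => ℕ) (k, f) j) else 0)
       = if Antitone f then (∑' k, if f 0 ≤ k then g k * ww k else 0) * ∏ j, ww (f j) else 0 := by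
      intro f
      simp only [Fin.consEquiv, Equiv.coe_fn_mk, antitone_cons, Fin.prod_univ_succ, Fin.cons_zero,
        Fin.cons_succ]
      by_cases hf : Antitone f
      · simp only [hf, and_true, if_true]
        rw [← ENNReal.tsum_mul_right]
        congr 1; ext k
        split_ifs
        · ring
        · simp
      · simp [hf]
    refine (tsum_congr h1).trans ?_
    rw [ih (fun m => ∑' k, if m ≤ k then g k * ww k else 0)]
    simp_rw [← ENNReal.tsum_mul_right]
    rw [ENNReal.tsum_comm]
    congr 1; ext k
    rw [tsum_eq_sum (s := Finset.range (k+1))]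
    · rw [TT.eq_2 k (d+1), div_eq_mul_one_div, ENNReal.ofReal_mul
        (Finset.sum_nonneg fun m _ => TT_nonneg _ m),
        ENNReal.ofReal_sum_of_nonneg (fun m _ => TT_nonneg _ m), mul_comm (∑ _ ∈ _, _), ← mul_assoc,
        Finset.mul_sum]
      refine Finset.sum_congr rfl fun m hm => ?_
      rw [if_pos (by simpa [Nat.lt_succ_iff] using hm)]; rfl
    · intro m hm
      rw [if_neg (by simpa [Nat.lt_succ_iff] using hm), zero_mul]

lemma comb_real (d : ℕ) (g : ℕ → ℝ) (hg : ∀ n, 0 ≤ g n) :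
    (∑' n : {n : Fin (d+1) → ℕ // Antitone n}, g (n.1 0) / ∏ j, (2 * (n.1 j : ℝ) + 1) ^ 2)
      = ∑' k, g k * TT (d+1) k := by
  classical
  have h := comb d (fun k => ENNReal.ofReal (g k))
  have h' := congrArg ENNReal.toReal h
  rw [ENNReal.tsum_toReal_eq (fun n => ENNReal.mul_ne_top ENNReal.ofReal_ne_top ENNReal.ofReal_ne_top)] at h'
  have e : ∀ k, (ENNReal.ofReal (g k) * ENNReal.ofReal (TT (d+1) k)).toReal = g k * TT (d+1) k := by
    intro k
    rw [ENNReal.toReal_mul, ENNReal.toReal_ofReal (hg k), ENNReal.toReal_ofReal (TT_nonneg _ k)]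
  simp_rw [e] at h'
  rw [← h', ENNReal.tsum_toReal_eq]
  · rw [← tsum_subtype_eq_of_support_subset (s := {n : Fin (d+1) → ℕ | Antitone n})]
    · refine tsum_congr fun n => ?_
      have hn : Antitone n.1 := n.2
      rw [if_pos hn, ENNReal.toReal_mul, ENNReal.toReal_ofReal (hg _), ENNReal.toReal_prod,
        div_eq_mul_inv, ← Finset.prod_inv_distrib]
      congr 1
      refine Finset.prod_congr rfl fun j _ => ?_
      rw [ww, ENNReal.toReal_ofReal (by positivity), one_div]
    · intro n hn
      by_contra hc
      have hc' : ¬ Antitone n := hc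
      simp [hc'] at hn
  · intro n
    split_ifs
    · refine ENNReal.mul_ne_top ENNReal.ofReal_ne_top (ENNReal.prod_ne_top fun j _ => ENNReal.ofReal_ne_top)
    · simp

/-- Proposition `pro-gtIds` (second identity): for `d ≥ 1` and `0 < y < π/2`,
the iterated sum over `n₁ ≥ ⋯ ≥ n_d ≥ 0` of
`4^{n₁} (sin y)^{2n₁} / (binom(2n₁,n₁) (2n₁+1)²⋯(2n_d+1)²)`
equals `(2/sin y) · Im Li_{2d}(i tan(y/2))`. -/
theorem stmt1 (d : ℕ) (hd : 1 ≤ d) (y : ℝ) (hy0 : 0 < y) (hy : y < π / 2) :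
    (∑' n : {n : Fin d → ℕ // Antitone n},
      ((4 : ℝ) ^ (n.1 ⟨0, hd⟩) * Real.sin y ^ (2 * n.1 ⟨0, hd⟩) /
        (Nat.choose (2 * n.1 ⟨0, hd⟩) (n.1 ⟨0, hd⟩) : ℝ)) /
      ∏ j : Fin d, (2 * (n.1 j : ℝ) + 1) ^ 2) =
    (2 / Real.sin y) *
      (∑' n : ℕ, (Complex.I * (Real.tan (y / 2) : ℂ)) ^ (n + 1) / ((n : ℂ) + 1) ^ (2 * d)).im := by
  obtain ⟨d, rfl⟩ : ∃ e, d = e + 1 := ⟨d - 1, by omega⟩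
  have hs : 0 < Real.sin y := Real.sin_pos_of_pos_of_lt_pi hy0 (by linarith)
  rw [im_side (d+1) hd _ (tan_lt hy0.le hy)]
  have h := FF_eq (d+1) y hy0 hy
  have h2 := comb_real d (fun n => (4 : ℝ) ^ n * Real.sin y ^ (2 * n) / (Nat.choose (2 * n) n : ℝ))
    (fun n => by positivity)
  refine Eq.trans h2 ?_
  have h3 : (2 / Real.sin y) * PP (bet (2*(d+1))) (Real.tan (y/2)) = FF (d+1) y / Real.sin y := by
    rw [h, LL]; ring
  rw [h3, FF, PP, ← tsum_div_const]
  congr 1; ext n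
  rw [aa, pow_succ]
  field_simp
end

section
/- For every integer d ≥ 2, the iterated sum over integers n₁ ≥ n₂ ≥ ⋯ ≥ n_d ≥ 0 of 2^{n₁} / (binom(2n₁, n₁) · (2n₁+1)(2n₂+1)⋯(2n_d+1)) equals 2 β(d), where β(s) = ∑_{k=0}^∞ (−1)^k/(2k+1)^s is the Dirichlet beta function. -/
open Real

namespace Stmt2Aux

noncomputable def A (d n : ℕ) : ℝ :=
  ∑ k ∈ Finset.range (n + 1), (n.choose k : ℝ) * (-1) ^ k / (2 * (k : ℝ) + 1) ^ d

noncomputable def H : ℕ → ℕ → ℝ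
  | 0, _ => 1
  | d + 1, n => ∑ m ∈ Finset.range (n + 1), H d m / (2 * (m : ℝ) + 1)

noncomputable def c (n : ℕ) : ℝ := 4 ^ n / ((Nat.centralBinom n : ℝ) * (2 * (n : ℝ) + 1))

lemma c_zero : c 0 = 1 := by simp [c]

lemma c_succ (n : ℕ) : (2 * (n : ℝ) + 3) * c (n + 1) = (2 * (n : ℝ) + 2) * c n := by
  have h : ((n : ℝ) + 1) * (Nat.centralBinom (n + 1) : ℝ)
      = 2 * (2 * (n : ℝ) + 1) * (Nat.centralBinom n : ℝ) := by
    exact_mod_cast Nat.succ_mul_centralBinom_succ n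
  have h1 : (0 : ℝ) < (Nat.centralBinom n : ℝ) := by exact_mod_cast Nat.centralBinom_pos n
  have h2 : (0 : ℝ) < (Nat.centralBinom (n + 1) : ℝ) := by
    exact_mod_cast Nat.centralBinom_pos (n + 1)
  have h3 : (0 : ℝ) < 2 * (n : ℝ) + 1 := by positivity
  have h4 : (0 : ℝ) < 2 * (n : ℝ) + 3 := by positivity
  have e1 : (2 * (n : ℝ) + 3) * c (n + 1) = 4 ^ (n + 1) / (Nat.centralBinom (n + 1) : ℝ) := by
    unfold c
    push_cast
    rw [show (2 * ((n : ℝ) + 1) + 1) = 2 * (n : ℝ) + 3 by ring]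
    field_simp
  rw [e1]
  unfold c
  rw [← mul_div_assoc, div_eq_div_iff h2.ne' (by positivity), pow_succ]
  linear_combination (-2 * 4 ^ n) * h

lemma A_rec (d n : ℕ) :
    (2 * (n : ℝ) + 3) * A (d + 1) (n + 1) = (2 * (n : ℝ) + 2) * A (d + 1) n + A d (n + 1) := by
  have h0 : A (d + 1) n = ∑ k ∈ Finset.range (n + 1 + 1),
      (n.choose k : ℝ) * (-1) ^ k / (2 * (k : ℝ) + 1) ^ (d + 1) := by
    rw [Finset.sum_range_succ _ (n + 1)]
    simp [A]
  rw [h0]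
  unfold A
  rw [Finset.mul_sum, Finset.mul_sum, ← Finset.sum_add_distrib]
  refine Finset.sum_congr rfl fun k hk => ?_
  have hk' : k ≤ n + 1 := by simpa [Nat.lt_succ_iff] using hk
  have h : ((n : ℝ) + 1) * (n.choose k : ℝ) = ((n + 1).choose k : ℝ) * ((n : ℝ) + 1 - k) := by
    have := Nat.choose_mul_succ_eq n k
    have h2 : ((n.choose k * (n + 1) : ℕ) : ℝ) = (((n + 1).choose k * (n + 1 - k) : ℕ) : ℝ) := by
      exact_mod_cast this
    push_cast [Nat.cast_sub hk'] at h2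
    linarith
  have hp : (2 * (k : ℝ) + 1) ≠ 0 := by positivity
  rw [pow_succ (2 * (k : ℝ) + 1) d]
  field_simp
  linear_combination (-2) * h

lemma A_zero_succ (n : ℕ) : A 0 (n + 1) = 0 := by
  have h := Int.alternating_sum_range_choose (n := n + 1)
  simp only [Nat.succ_ne_zero, if_false] at h
  have h2 : ((∑ m ∈ Finset.range (n + 1 + 1), ((-1) ^ m * ((n + 1).choose m : ℤ)) : ℤ) : ℝ) = 0 := by
    exact_mod_cast h
  push_cast at h2
  rw [← h2]
  unfold A
  refine Finset.sum_congr rfl fun k _ => ?_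
  simp [mul_comm]

lemma A_eq (d n : ℕ) : A (d + 1) n = c n * H d n := by
  induction d generalizing n with
  | zero =>
    induction n with
    | zero => simp [A, H, c_zero]
    | succ n ih =>
      have h := A_rec 0 n
      rw [A_zero_succ, ih] at h
      have hc := c_succ n
      have h4 : (2 * (n : ℝ) + 3) ≠ 0 := by positivity
      apply mul_left_cancel₀ h4
      simp only [H] at *
      linarith
  | succ d ihd =>
    induction n with
    | zero =>
      have h1 := ihd 0
      simp only [c_zero] at h1
      simp [H, c_zero, A] at *
      linarith
    | succ n ih =>
      have h := A_rec (d + 1) n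
      rw [ih, ihd] at h
      have hc := c_succ n
      have h4 : (2 * (n : ℝ) + 3) ≠ 0 := by positivity
      apply mul_left_cancel₀ h4
      rw [h]
      have hH : H (d + 1) (n + 1) = H (d + 1) n + H d (n + 1) / (2 * (n : ℝ) + 3) := by
        have h5 : H (d + 1) (n + 1) = H (d + 1) n + H d (n + 1) / (2 * ((n + 1 : ℕ) : ℝ) + 1) := by
          simp only [H]
          rw [Finset.sum_range_succ _ (n + 1)]
        rw [h5]
        push_cast
        rw [show (2 * ((n : ℝ) + 1) + 1) = 2 * (n : ℝ) + 3 by ring]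
      rw [hH]
      field_simp
      linear_combination (-H (d + 1) n) * hc

lemma H_nonneg (d n : ℕ) : 0 ≤ H d n := by
  induction d generalizing n with
  | zero => simp [H]
  | succ d ih =>
    rw [H]
    exact Finset.sum_nonneg fun m _ => div_nonneg (ih m) (by positivity)

lemma antitone_cons {d : ℕ} (m : ℕ) (f : Fin d → ℕ) :
    Antitone (Fin.cons m f : Fin (d + 1) → ℕ) ↔ (Antitone f ∧ ∀ i, f i ≤ m) := by
  constructor
  · intro h
    refine ⟨fun i j hij => ?_, fun i => ?_⟩
    · simpa using h (Fin.succ_le_succ_iff.2 hij)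
    · simpa using h (Fin.zero_le i.succ)
  · rintro ⟨h1, h2⟩ i j hij
    induction i using Fin.cases with
    | zero =>
      induction j using Fin.cases with
      | zero => simp
      | succ j => simpa using h2 j
    | succ i =>
      induction j using Fin.cases with
      | zero => simp at hij
      | succ j => simpa using h1 (Fin.succ_le_succ_iff.1 hij)

noncomputable def P {d : ℕ} (f : Fin d → ℕ) : ENNReal :=
  ENNReal.ofReal (∏ j, (1 / (2 * (f j : ℝ) + 1)))

lemma P_cons {d : ℕ} (m : ℕ) (f : Fin d → ℕ) :
    P (Fin.cons m f : Fin (d + 1) → ℕ) = ENNReal.ofReal (1 / (2 * (m : ℝ) + 1)) * P f := by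
  unfold P
  rw [Fin.prod_univ_succ, ENNReal.ofReal_mul (by positivity)]
  simp

lemma tsum_cons (d : ℕ) (G : (Fin (d + 1) → ℕ) → ENNReal) :
    ∑' f, G f = ∑' m : ℕ, ∑' f : Fin d → ℕ, G (Fin.cons m f : Fin (d + 1) → ℕ) := by
  rw [← (Fin.consEquiv (fun _ : Fin (d + 1) => ℕ)).tsum_eq]
  exact ENNReal.tsum_prod (f := fun (m : ℕ) (f : Fin d → ℕ) => G (Fin.cons m f : Fin (d + 1) → ℕ))

open Classical in
lemma tsum_H (d N : ℕ) :
    ∑' f : Fin d → ℕ, (if Antitone f ∧ ∀ i, f i ≤ N then P f else 0) = ENNReal.ofReal (H d N) := by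
  induction d generalizing N with
  | zero =>
    rw [tsum_eq_single default (fun b hb => absurd (Subsingleton.elim _ _) hb)]
    rw [if_pos ⟨fun i => i.elim0, fun i => i.elim0⟩]
    simp [P, H]
  | succ d ih =>
    rw [tsum_cons]
    have key : ∀ m : ℕ, ∑' f : Fin d → ℕ,
        (if Antitone (Fin.cons m f : Fin (d + 1) → ℕ) ∧
          ∀ i, (Fin.cons m f : Fin (d + 1) → ℕ) i ≤ N then
          P (Fin.cons m f : Fin (d + 1) → ℕ) else 0)
        = if m ∈ Finset.range (N + 1) then ENNReal.ofReal (H d m / (2 * (m : ℝ) + 1)) else 0 := by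
      intro m
      simp only [antitone_cons, P_cons]
      split_ifs with hm
      · have hm' : m ≤ N := by simpa [Nat.lt_succ_iff] using hm
        rw [show H d m / (2 * (m : ℝ) + 1) = 1 / (2 * (m : ℝ) + 1) * H d m by ring, ENNReal.ofReal_mul (by positivity), ← ih m,
          ← ENNReal.tsum_mul_left]
        refine tsum_congr fun f => ?_
        by_cases h : Antitone f ∧ ∀ i, f i ≤ m
        · rw [if_pos h, if_pos]
          refine ⟨h, fun i => ?_⟩
          induction i using Fin.cases with
          | zero => simpa using hm'
          | succ i => simpa using (h.2 i).trans hm'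
        · rw [if_neg h, if_neg (fun h' => h h'.1), mul_zero]
      · rw [ENNReal.tsum_eq_zero]
        intro f
        rw [if_neg]
        intro h
        apply hm
        have := h.2 0
        simp at this
        simpa [Nat.lt_succ_iff] using this
    simp only [key]
    rw [H, ENNReal.ofReal_sum_of_nonneg
      (fun m _ => div_nonneg (H_nonneg d m) (by positivity)),
      tsum_eq_sum (s := Finset.range (N + 1)) (fun b hb => if_neg hb)]
    exact Finset.sum_congr rfl fun m hm => if_pos hm

lemma hasSum_choose (k : ℕ) : HasSum (fun n : ℕ => (n.choose k : ℝ) / 2 ^ n) 2 := by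
  have h := hasSum_choose_mul_geometric_of_norm_lt_one k (r := (1 / 2 : ℝ)) (by norm_num)
  rw [← hasSum_nat_add_iff' k]
  have h0 : ∑ i ∈ Finset.range k, (i.choose k : ℝ) / 2 ^ i = 0 :=
    Finset.sum_eq_zero fun i hi => by
      rw [Nat.choose_eq_zero_of_lt (Finset.mem_range.1 hi)]; simp
  rw [h0, sub_zero]
  have h2 := h.mul_left ((1 / 2 : ℝ) ^ k)
  have e1 : (fun n : ℕ => ((n + k).choose k : ℝ) / 2 ^ (n + k))
      = fun n : ℕ => (1 / 2 : ℝ) ^ k * (((n + k).choose k : ℝ) * (1 / 2 : ℝ) ^ n) := by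
    funext n
    rw [pow_add, one_div, inv_pow, inv_pow]
    field_simp
  have e2 : (1 / 2 : ℝ) ^ k * (1 / (1 - 1 / 2) ^ (k + 1)) = 2 := by
    rw [show (1 - 1 / 2 : ℝ) = 1 / 2 by norm_num, pow_succ]
    field_simp
  rw [e2] at h2
  rw [e1]
  exact h2

lemma euler (b : ℕ → ℝ) (hb : Summable fun k => |b k|) :
    ∑' n : ℕ, (∑ k ∈ Finset.range (n + 1), (n.choose k : ℝ) * b k) / 2 ^ n = 2 * ∑' k, b k := by
  have hs : Summable (fun p : ℕ × ℕ => (p.2.choose p.1 : ℝ) / 2 ^ p.2 * b p.1) := by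
    apply Summable.of_norm
    have e : (fun p : ℕ × ℕ => ‖(p.2.choose p.1 : ℝ) / 2 ^ p.2 * b p.1‖)
        = fun p : ℕ × ℕ => (p.2.choose p.1 : ℝ) / 2 ^ p.2 * |b p.1| := by
      funext p
      rw [norm_mul, Real.norm_eq_abs, Real.norm_eq_abs, abs_of_nonneg (by positivity)]
    rw [e]
    have hnn : (0 : ℕ × ℕ → ℝ) ≤ fun p : ℕ × ℕ => (p.2.choose p.1 : ℝ) / 2 ^ p.2 * |b p.1| :=
      fun p => mul_nonneg (div_nonneg (Nat.cast_nonneg _) (pow_nonneg zero_le_two _)) (abs_nonneg _)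
    have hx : ∀ k : ℕ, Summable fun n : ℕ => (n.choose k : ℝ) / 2 ^ n * |b k| := fun k =>
      Summable.mul_right (|b k|) (hasSum_choose k).summable
    rw [summable_prod_of_nonneg hnn]
    refine ⟨hx, ?_⟩
    have : (fun k : ℕ => ∑' n : ℕ, (n.choose k : ℝ) / 2 ^ n * |b k|) = fun k => 2 * |b k| := by
      funext k
      rw [tsum_mul_right, (hasSum_choose k).tsum_eq]
    have h9 : Summable fun k => 2 * |b k| := Summable.mul_left 2 hb
    rw [← this] at h9
    exact h9
  have hc := Summable.tsum_comm (f := fun (k n : ℕ) => (n.choose k : ℝ) / 2 ^ n * b k) hs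
  have h1 : ∀ k : ℕ, ∑' n : ℕ, (n.choose k : ℝ) / 2 ^ n * b k = 2 * b k := fun k => by
    rw [tsum_mul_right, (hasSum_choose k).tsum_eq]
  simp only [h1, tsum_mul_left] at hc
  rw [← hc]
  refine tsum_congr fun n => ?_
  rw [tsum_eq_sum (s := Finset.range (n + 1)), Finset.sum_div]
  · exact Finset.sum_congr rfl fun k _ => by ring
  · intro k hk
    rw [Nat.choose_eq_zero_of_lt (by simpa using hk)]; simp

lemma summable_b (d : ℕ) (hd : 2 ≤ d) :
    Summable fun k : ℕ => |(-1 : ℝ) ^ k / (2 * (k : ℝ) + 1) ^ d| := by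
  have h := (summable_nat_add_iff 1).2 (Real.summable_one_div_nat_pow.2 (show 1 < d by omega))
  refine Summable.of_nonneg_of_le (fun _ => abs_nonneg _) (fun k => ?_) h
  rw [abs_div, abs_pow, abs_neg, abs_one, one_pow, abs_of_nonneg (by positivity)]
  apply one_div_le_one_div_of_le (by positivity)
  push_cast
  gcongr
  linarith [Nat.cast_nonneg (α := ℝ) k]

lemma term_eq (e n : ℕ) :
    (2 : ℝ) ^ n / ((Nat.choose (2 * n) n : ℝ) * (2 * (n : ℝ) + 1)) * H e n
      = A (e + 1) n / 2 ^ n := by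
  rw [A_eq, c, Nat.centralBinom, show (4 : ℝ) ^ n = 2 ^ n * 2 ^ n by rw [← mul_pow]; norm_num]
  field_simp

open Classical in
lemma main (e : ℕ) (he : 2 ≤ e + 1) :
    (∑' n : {n : Fin (e + 1) → ℕ // Antitone n},
      ((2 : ℝ) ^ (n.1 0) / ((Nat.choose (2 * n.1 0) (n.1 0) : ℝ) *
          ∏ j, (2 * (n.1 j : ℝ) + 1)))) =
    2 * ∑' k : ℕ, (-1 : ℝ) ^ k / (2 * (k : ℝ) + 1) ^ (e + 1) := by
  rw [← euler _ (summable_b _ he)]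
  let g : ℕ → ℝ := fun n => (2 : ℝ) ^ n / ((Nat.choose (2 * n) n : ℝ) * (2 * (n : ℝ) + 1))
  have hg : ∀ n, 0 ≤ g n := fun n => by positivity
  let F : (Fin (e + 1) → ℕ) → ℝ := fun n => (2 : ℝ) ^ (n 0) /
    ((Nat.choose (2 * n 0) (n 0) : ℝ) * ∏ j, (2 * (n j : ℝ) + 1))
  have hF : ∀ n, 0 ≤ F n := fun n => by
    have : 0 ≤ ∏ j, (2 * (n j : ℝ) + 1) := Finset.prod_nonneg fun j _ => by positivity
    positivity
  have hFc : ∀ m (f : Fin e → ℕ), ENNReal.ofReal (F (Fin.cons m f : Fin (e + 1) → ℕ))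
      = ENNReal.ofReal (g m) * P f := fun m f => by
    unfold P
    rw [← ENNReal.ofReal_mul (hg m)]
    congr 1
    simp only [F, g, Fin.prod_univ_succ, Fin.cons_zero, Fin.cons_succ, Finset.prod_div_distrib,
      Finset.prod_const_one]
    rw [div_mul_div_comm, mul_one, mul_assoc]
  have hE : ∑' n : {n : Fin (e + 1) → ℕ // Antitone n}, ENNReal.ofReal (F n.1)
      = ∑' n : ℕ, ENNReal.ofReal (A (e + 1) n / 2 ^ n) := by
    have h1 := tsum_subtype {n : Fin (e + 1) → ℕ | Antitone n} (fun n => ENNReal.ofReal (F n))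
    refine h1.trans ?_
    rw [tsum_cons]
    refine tsum_congr fun m => ?_
    rw [← term_eq, ENNReal.ofReal_mul (hg m), ← tsum_H, ← ENNReal.tsum_mul_left]
    refine tsum_congr fun f => ?_
    by_cases h : Antitone (Fin.cons m f : Fin (e + 1) → ℕ)
    · rw [Set.indicator_of_mem (by exact h), hFc, if_pos ((antitone_cons m f).1 h)]
    · rw [Set.indicator_of_notMem (by exact h), if_neg (fun h' => h ((antitone_cons m f).2 h')),
        mul_zero]
  have hA : ∀ n, 0 ≤ A (e + 1) n / 2 ^ n := fun n => by
    rw [← term_eq]; exact mul_nonneg (hg n) (H_nonneg e n)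
  have h3 := congrArg ENNReal.toReal hE
  rw [ENNReal.tsum_toReal_eq (fun _ => ENNReal.ofReal_ne_top),
    ENNReal.tsum_toReal_eq (fun _ => ENNReal.ofReal_ne_top)] at h3
  simp only [ENNReal.toReal_ofReal (hF _), ENNReal.toReal_ofReal (hA _)] at h3
  refine h3.trans (tsum_congr fun n => ?_)
  unfold A
  congr 1
  exact Finset.sum_congr rfl fun k _ => by ring

end Stmt2Aux

/-- For `d ≥ 2`, the iterated sum over `n₁ ≥ ⋯ ≥ n_d ≥ 0` of
`2^{n₁} / (binom(2n₁,n₁) (2n₁+1)⋯(2n_d+1))` equals `2β(d)`,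
where `β` is the Dirichlet beta function. -/
theorem stmt2 (d : ℕ) (hd : 2 ≤ d) :
    (∑' n : {n : Fin d → ℕ // Antitone n},
      ((2 : ℝ) ^ (n.1 ⟨0, by omega⟩) /
        ((Nat.choose (2 * n.1 ⟨0, by omega⟩) (n.1 ⟨0, by omega⟩) : ℝ) *
          ∏ j : Fin d, (2 * (n.1 j : ℝ) + 1)))) =
    2 * ∑' k : ℕ, (-1 : ℝ) ^ k / (2 * (k : ℝ) + 1) ^ d := by
  obtain ⟨e, rfl⟩ : ∃ e, d = e + 1 := ⟨d - 1, by omega⟩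
  exact Stmt2Aux.main e hd
end

section
/- For every integer d ≥ 1, the iterated sum over integers n₁ ≥ n₂ ≥ ⋯ ≥ n_d ≥ 0 of 4^{n₁} / (binom(2n₁, n₁) · (2n₁+1)²(2n₂+1)²⋯(2n_d+1)²) equals 2 β(2d), where β(s) = ∑_{k=0}^∞ (−1)^k/(2k+1)^s is the Dirichlet beta function. -/
open Real

namespace BetaSum

noncomputable def P (n k : ℕ) : ℝ := (Nat.choose (2 * n) (n + k) : ℝ) / 4 ^ n

noncomputable def B (n k : ℕ) : ℝ :=
  (2 * n + 1) * (Nat.choose (2 * n) n : ℝ) / 16 ^ n * (-1) ^ k *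
    (Nat.choose (2 * n + 1) (n + 1 + k) : ℝ) / (2 * k + 1)

lemma choose_rel (n k : ℕ) :
    (Nat.choose (2 * n) (n + k + 1) : ℝ) * (n + k + 1) =
      (Nat.choose (2 * n) (n + k) : ℝ) * (n - k) := by
  have h := Nat.choose_succ_right_eq (2 * n) (n + k)
  by_cases hk : k ≤ n
  · have h2 : 2 * n - (n + k) = n - k := by omega
    rw [h2] at h
    have := congrArg (Nat.cast (R := ℝ)) h
    push_cast [Nat.cast_sub hk] at this
    exact this
  · rw [Nat.choose_eq_zero_of_lt (by omega), Nat.choose_eq_zero_of_lt (by omega)]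
    simp

lemma pascal (n k : ℕ) :
    (Nat.choose (2 * n + 1) (n + 1 + k) : ℝ) =
      Nat.choose (2 * n) (n + k) + Nat.choose (2 * n) (n + k + 1) := by
  rw [show n + 1 + k = (n + k) + 1 by ring, Nat.choose_succ_succ]
  push_cast; rfl

lemma c_rel (n k : ℕ) :
    (2 * k + 1) * (Nat.choose (2 * n + 1) (n + 1 + k) : ℝ) =
      (2 * n + 1) * (Nat.choose (2 * n) (n + k) - Nat.choose (2 * n) (n + k + 1)) := by
  rw [pascal]
  linear_combination 2 * choose_rel n k

lemma c_succ (n k : ℕ) :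
    ((n : ℝ) + 1 - k) * (n + k + 2) * (Nat.choose (2 * (n + 1) + 1) (n + 1 + 1 + k) : ℝ) =
      (2 * n + 3) * (2 * n + 2) * (Nat.choose (2 * n + 1) (n + 1 + k) : ℝ) := by
  by_cases hk : k ≤ n + 1
  · have h1 := Nat.add_one_mul_choose_eq (2 * n + 2) (n + 1 + k)
    have h2 := Nat.choose_mul_succ_eq (2 * n + 1) (n + 1 + k)
    have h3 : 2 * n + 1 + 1 - (n + 1 + k) = n + 1 - k := by omega
    rw [h3] at h2
    have h1' := congrArg (Nat.cast (R := ℝ)) h1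
    have h2' := congrArg (Nat.cast (R := ℝ)) h2
    push_cast [Nat.cast_sub hk] at h1' h2'
    rw [show 2 * (n + 1) + 1 = 2 * n + 2 + 1 by ring,
      show n + 1 + 1 + k = n + 1 + k + 1 by ring]
    rw [show 2 * n + 1 + 1 = 2 * n + 2 by ring] at h2'
    linear_combination (-((n : ℝ) + 1 - k)) * h1' - (2 * n + 3) * h2'
  · rw [Nat.choose_eq_zero_of_lt (by omega), Nat.choose_eq_zero_of_lt (by omega)]
    simp

lemma central_succ (n : ℕ) :
    ((n : ℝ) + 1) * (Nat.choose (2 * (n + 1)) (n + 1) : ℝ) =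
      2 * (2 * n + 1) * (Nat.choose (2 * n) n : ℝ) := by
  have h := congrArg (Nat.cast (R := ℝ)) (Nat.succ_mul_centralBinom_succ n)
  simp only [Nat.centralBinom] at h
  push_cast at h
  exact h

lemma B_rec (n k : ℕ) :
    (B (n + 1) k - B n k) * (2 * n + 3) ^ 2 = B (n + 1) k * (2 * k + 1) ^ 2 := by
  have h1 := central_succ n
  have h2 := c_succ n k
  have h3 : (2 * (k : ℝ) + 1) ≠ 0 := by positivity
  have h4 : ((n : ℝ) + 1) ≠ 0 := by positivity
  have e1 : (Nat.choose (2 * (n + 1)) (n + 1) : ℝ) =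
      2 * (2 * n + 1) * (Nat.choose (2 * n) n : ℝ) / (n + 1) := by
    field_simp; linarith
  unfold B
  rw [e1]
  generalize (Nat.choose (2 * (n + 1) + 1) (n + 1 + 1 + k) : ℝ) = X at *
  generalize (Nat.choose (2 * n + 1) (n + 1 + k) : ℝ) = Y at *
  generalize (Nat.choose (2 * n) n : ℝ) = Z at *
  push_cast
  rw [pow_succ]
  field_simp
  linear_combination (8 * (2 * n + 3) * Z) * h2

lemma alt_sum (n K : ℕ) :
    (n : ℝ) * ∑ k ∈ Finset.range K, (-1 : ℝ) ^ k * ((2 * k + 1) *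
      (Nat.choose (2 * n + 1) (n + 1 + k) : ℝ)) =
    (-1) ^ (K + 1) * K * (2 * n + 1) * (Nat.choose (2 * n) (n + K) : ℝ) := by
  induction K with
  | zero => simp
  | succ K ih =>
    rw [Finset.sum_range_succ, mul_add, ih, c_rel]
    have h := choose_rel n K
    rw [show n + (K + 1) = n + K + 1 by ring]
    push_cast
    rw [pow_succ, pow_succ]
    linear_combination (-(-1 : ℝ) ^ K * (2 * n + 1)) * h

lemma B_sq_sum (n : ℕ) :
    ∑ k ∈ Finset.range (n + 1 + 1), B (n + 1) k * (2 * k + 1) ^ 2 = 0 := by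
  have h := alt_sum (n + 1) (n + 1 + 1)
  rw [Nat.choose_eq_zero_of_lt (show 2 * (n + 1) < n + 1 + (n + 1 + 1) by omega)] at h
  have h0 : ((n + 1 : ℕ) : ℝ) ≠ 0 := by positivity
  simp only [Nat.cast_zero, mul_zero, mul_eq_zero, h0, false_or] at h
  have : ∀ k ∈ Finset.range (n + 1 + 1), B (n + 1) k * (2 * k + 1) ^ 2 =
      ((2 * (n + 1 : ℕ) + 1) * (Nat.choose (2 * (n + 1)) (n + 1) : ℝ) / 16 ^ (n + 1)) *
      ((-1 : ℝ) ^ k * ((2 * k + 1) *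
      (Nat.choose (2 * (n + 1) + 1) (n + 1 + 1 + k) : ℝ))) := by
    intro k _
    have h3 : (2 * (k : ℝ) + 1) ≠ 0 := by positivity
    unfold B
    field_simp
  rw [Finset.sum_congr rfl this, ← Finset.mul_sum, h, mul_zero]

noncomputable def Hs (d n : ℕ) : ℝ :=
  ∑ k ∈ Finset.range (n + 1), B n k * (1 / (2 * (k : ℝ) + 1) ^ 2) ^ d

lemma B_zero {n k : ℕ} (h : n < k) : B n k = 0 := by
  unfold B
  rw [Nat.choose_eq_zero_of_lt (show 2 * n + 1 < n + 1 + k by omega)]; simp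

lemma Hs_ext (d n : ℕ) :
    Hs d n = ∑ k ∈ Finset.range (n + 1 + 1), B n k * (1 / (2 * (k : ℝ) + 1) ^ 2) ^ d := by
  rw [Finset.sum_range_succ, B_zero (Nat.lt_succ_self n)]; simp [Hs]

lemma Hs_zero_right (d : ℕ) : Hs d 0 = 1 := by simp [Hs, B]

lemma Hs_zero (n : ℕ) : Hs 0 n = 1 := by
  induction n with
  | zero => exact Hs_zero_right 0
  | succ n ih =>
    rw [← ih, ← sub_eq_zero, Hs_ext 0 n, Hs, ← Finset.sum_sub_distrib]
    have h0 : (2 * (n : ℝ) + 3) ^ 2 ≠ 0 := by positivity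
    have := B_sq_sum n
    simp_rw [← B_rec, ← Finset.sum_mul] at this
    simpa [h0] using this

lemma Hs_succ (d n : ℕ) :
    Hs (d + 1) (n + 1) = Hs (d + 1) n + 1 / (2 * ((n + 1 : ℕ) : ℝ) + 1) ^ 2 * Hs d (n + 1) := by
  rw [Hs_ext (d + 1) n, Hs, Hs, Finset.mul_sum, ← Finset.sum_add_distrib]
  refine Finset.sum_congr rfl fun k _ => ?_
  have h := B_rec n k
  have h3 : (2 * (k : ℝ) + 1) ≠ 0 := by positivity
  have h4 : (2 * (n : ℝ) + 3) ≠ 0 := by positivity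
  have h5 : (2 * ((n + 1 : ℕ) : ℝ) + 1) = 2 * n + 3 := by push_cast; ring
  rw [h5]
  rw [pow_succ]
  generalize (1 / (2 * (k : ℝ) + 1) ^ 2) ^ d = w
  field_simp
  linear_combination w * h

lemma Hs_sum (d n : ℕ) :
    Hs (d + 1) n = ∑ m ∈ Finset.range (n + 1), 1 / (2 * (m : ℝ) + 1) ^ 2 * Hs d m := by
  induction n with
  | zero => simp [Hs_zero_right]
  | succ n ih => rw [Finset.sum_range_succ, ← ih, Hs_succ]

/-- bounded antitone sequences -/
noncomputable def S (d n : ℕ) : Finset (Fin d → ℕ) := by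
  classical
  exact (Fintype.piFinset fun _ => Finset.range (n + 1)).filter fun x => Antitone x

lemma mem_S {d n : ℕ} {x : Fin d → ℕ} : x ∈ S d n ↔ (∀ i, x i ≤ n) ∧ Antitone x := by
  simp [S]

lemma antitone_iff {d : ℕ} (x : Fin (d + 1) → ℕ) :
    Antitone x ↔ Fin.tail x ∈ S d (x 0) := by
  rw [mem_S]
  constructor
  · intro h
    exact ⟨fun i => h (Fin.zero_le _), fun i j hij => h (Fin.succ_le_succ_iff.2 hij)⟩
  · rintro ⟨h1, h2⟩ i j hij
    induction i using Fin.cases with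
    | zero =>
      induction j using Fin.cases with
      | zero => exact le_rfl
      | succ j => exact h1 j
    | succ i =>
      induction j using Fin.cases with
      | zero => simp at hij
      | succ j => exact h2 (Fin.succ_le_succ_iff.1 hij)

noncomputable def wt {d : ℕ} (x : Fin d → ℕ) : ℝ := ∏ j, 1 / (2 * (x j : ℝ) + 1) ^ 2

lemma wt_succ {d : ℕ} (x : Fin (d + 1) → ℕ) :
    wt x = 1 / (2 * (x 0 : ℝ) + 1) ^ 2 * wt (Fin.tail x) := by
  unfold wt
  rw [Fin.prod_univ_succ]; rfl

lemma sum_S (d n : ℕ) : ∑ x ∈ S d n, wt x = Hs d n := by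
  induction d generalizing n with
  | zero =>
    rw [Hs_zero]
    have : S 0 n = Finset.univ := by
      ext x; simp only [mem_S, Finset.mem_univ, iff_true]
      exact ⟨fun i => i.elim0, fun i => i.elim0⟩
    rw [this]; simp [wt]
  | succ d ih =>
    rw [Hs_sum]
    simp_rw [← ih, Finset.mul_sum]
    rw [Finset.sum_sigma']
    refine Finset.sum_nbij' (fun x => ⟨x 0, Fin.tail x⟩) (fun p => Fin.cons p.1 p.2) ?_ ?_ ?_ ?_ ?_
    · intro x hx
      rw [mem_S] at hx
      simp only [Finset.mem_sigma, Finset.mem_range]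
      exact ⟨Nat.lt_succ_of_le (hx.1 0), (antitone_iff x).1 hx.2⟩
    · rintro ⟨m, y⟩ hp
      simp only [Finset.mem_sigma, Finset.mem_range] at hp
      rw [mem_S, antitone_iff]
      simp only [Fin.tail_cons, Fin.cons_zero]
      refine ⟨fun i => ?_, hp.2⟩
      have := (mem_S.1 hp.2).1
      induction i using Fin.cases with
      | zero => simp; omega
      | succ i => simp; have := this i; omega
    · intro x _; simp
    · rintro ⟨m, y⟩ _; simp
    · intro x _; exact wt_succ x

noncomputable def eqv (d : ℕ) : (Σ n : ℕ, {y // y ∈ S d n}) ≃ {x : Fin (d + 1) → ℕ // Antitone x} where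
  toFun p := ⟨Fin.cons p.1 p.2.1, by
    rw [antitone_iff]; simpa only [Fin.tail_cons, Fin.cons_zero] using p.2.2⟩
  invFun x := ⟨x.1 0, ⟨Fin.tail x.1, (antitone_iff _).1 x.2⟩⟩
  left_inv := by rintro ⟨n, y, hy⟩; rfl
  right_inv := by rintro ⟨x, hx⟩; simp

/-! the sum over n -/

lemma P_le (n k : ℕ) : P n k ≤ P n 0 := by
  unfold P
  gcongr
  have := Nat.choose_le_centralBinom (n + k) n
  simpa [Nat.centralBinom] using this

lemma P_nonneg (n k : ℕ) : 0 ≤ P n k := by unfold P; positivity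

lemma P0_sq (n : ℕ) : (P n 0) ^ 2 * (2 * n + 1) ≤ 1 := by
  induction n with
  | zero => simp [P]
  | succ n ih =>
    have h : P (n + 1) 0 = P n 0 * ((2 * n + 1) / (2 * n + 2)) := by
      have := central_succ n
      unfold P
      simp only [add_zero]
      rw [pow_succ]
      field_simp
      linear_combination 2 * this
    refine le_trans ?_ ih
    rw [h, mul_pow, mul_assoc]
    gcongr
    rw [div_pow, div_mul_eq_mul_div, div_le_iff₀ (by positivity)]
    push_cast
    have : (0 : ℝ) ≤ n := by positivity
    nlinarith

open Filter Topology

lemma P0_tendsto : Tendsto (fun n => P n 0) atTop (𝓝 0) := by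
  have h : Tendsto (fun n : ℕ => (P n 0) ^ 2) atTop (𝓝 0) := by
    refine squeeze_zero (fun n => sq_nonneg _) (fun n => ?_)
      tendsto_one_div_add_atTop_nhds_zero_nat
    rw [le_div_iff₀ (by positivity)]
    refine le_trans ?_ (P0_sq n)
    gcongr
    have : (0 : ℝ) ≤ n := by positivity
    linarith
  have h2 := h.sqrt
  simpa [Real.sqrt_sq (P_nonneg _ _)] using h2

lemma P_tendsto (k : ℕ) : Tendsto (fun n => P n k) atTop (𝓝 0) :=
  squeeze_zero (fun n => P_nonneg n k) (fun n => P_le n k) P0_tendsto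

lemma P_rec (n j : ℕ) :
    4 * P (n + 1) (j + 1) = P n j + 2 * P n (j + 1) + P n (j + 2) := by
  have : Nat.choose (2 * (n + 1)) (n + 1 + (j + 1)) = Nat.choose (2 * n) (n + j) +
      2 * Nat.choose (2 * n) (n + (j + 1)) + Nat.choose (2 * n) (n + (j + 2)) := by
    rw [show 2 * (n + 1) = 2 * n + 1 + 1 by ring, show n + 1 + (j + 1) = n + j + 1 + 1 by ring,
      Nat.choose_succ_succ, Nat.choose_succ_succ, Nat.choose_succ_succ]
    simp only [Nat.succ_eq_add_one, ← add_assoc]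
    ring
  unfold P
  rw [this, pow_succ]
  push_cast
  field_simp

lemma P_rec0 (n : ℕ) : 2 * P (n + 1) 0 = P n 0 + P n 1 := by
  have h1 := central_succ n
  have h2 := choose_rel n 0
  have h4 : ((n : ℝ) + 1) ≠ 0 := by positivity
  unfold P
  simp only [add_zero, Nat.cast_zero, sub_zero] at *
  rw [pow_succ]
  field_simp
  apply mul_left_cancel₀ h4
  linear_combination 2 * h1 - 4 * h2

noncomputable def D (k N : ℕ) : ℝ := ∑ n ∈ Finset.range N, (P n k - P n (k + 1))

lemma D_zero (N : ℕ) : D 0 N = 2 * (1 - P N 0) := by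
  induction N with
  | zero => simp [D, P]
  | succ N ih =>
    have : D 0 (N + 1) = D 0 N + (P N 0 - P N 1) := Finset.sum_range_succ _ _
    rw [this, ih]
    linear_combination P_rec0 N

lemma D_succ (k N : ℕ) : D (k + 1) N = D k N - 4 * P N (k + 1) := by
  induction N with
  | zero => simp [D, P]
  | succ N ih =>
    have : ∀ k, D k (N + 1) = D k N + (P N k - P N (k + 1)) := by
      intro k; exact Finset.sum_range_succ _ _
    rw [this, this, ih]
    linear_combination P_rec N k

lemma D_tendsto (k : ℕ) : Tendsto (D k) atTop (𝓝 2) := by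
  induction k with
  | zero =>
    have : D 0 = fun N => 2 * (1 - P N 0) := funext D_zero
    rw [this]
    simpa using (P0_tendsto.const_sub 1).const_mul 2
  | succ k ih =>
    have : D (k + 1) = fun N => D k N - 4 * P N (k + 1) := funext (D_succ k)
    rw [this]
    simpa using ih.sub ((P_tendsto (k + 1)).const_mul 4)

noncomputable def T (n k : ℕ) : ℝ :=
  (Nat.choose (2 * n + 1) (n + 1 + k) : ℝ) / (4 ^ n * (2 * n + 1))

lemma T_nonneg (n k : ℕ) : 0 ≤ T n k := by unfold T; positivity

lemma T_eq (n k : ℕ) : (2 * k + 1) * T n k = P n k - P n (k + 1) := by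
  have h := c_rel n k
  unfold T P
  rw [show n + (k + 1) = n + k + 1 by ring]
  field_simp
  linear_combination h

lemma T_hasSum (k : ℕ) : HasSum (fun n => T n k) (2 / (2 * (k : ℝ) + 1)) := by
  rw [hasSum_iff_tendsto_nat_of_nonneg (fun n => T_nonneg n k)]
  have h3 : (2 * (k : ℝ) + 1) ≠ 0 := by positivity
  have := (D_tendsto k).div_const (2 * (k : ℝ) + 1)
  refine this.congr fun N => ?_
  rw [D, div_eq_iff h3, Finset.sum_mul]
  refine Finset.sum_congr rfl fun n _ => ?_
  rw [← T_eq]; ring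

noncomputable def F (e : ℕ) (p : ℕ × ℕ) : ℝ :=
  (-1) ^ p.1 * (T p.2 p.1 / (2 * (p.1 : ℝ) + 1) * (1 / (2 * (p.1 : ℝ) + 1) ^ 2) ^ e)

lemma HasSum.congr_val {f : ℕ → ℝ} {a b : ℝ} (h : HasSum f a) (e : b = a) : HasSum f b := e ▸ h

lemma F_hasSum_right (e k : ℕ) :
    HasSum (fun n => F e (k, n)) (2 * ((-1 : ℝ) ^ k / (2 * (k : ℝ) + 1) ^ (2 * (e + 1)))) := by
  have h := (((T_hasSum k).div_const (2 * (k : ℝ) + 1)).mul_right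
    ((1 / (2 * (k : ℝ) + 1) ^ 2) ^ e)).mul_left ((-1 : ℝ) ^ k)
  refine HasSum.congr_val h ?_
  have h3 : (2 * (k : ℝ) + 1) ≠ 0 := by positivity
  rw [mul_add, pow_add, pow_mul, div_pow, one_pow]
  field_simp

lemma beta_summable (e : ℕ) :
    Summable fun k : ℕ => 2 * (1 / (2 * (k : ℝ) + 1) ^ (2 * (e + 1))) := by
  apply Summable.mul_left
  have h : Summable fun k : ℕ => 1 / ((k + 1 : ℕ) : ℝ) ^ 2 :=
    (summable_nat_add_iff 1).2 (Real.summable_one_div_nat_pow.2 one_lt_two)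
  refine Summable.of_nonneg_of_le (fun k => by positivity) (fun k => ?_) h
  have h0 : (0 : ℝ) ≤ k := by positivity
  apply one_div_le_one_div_of_le (by positivity)
  calc ((k + 1 : ℕ) : ℝ) ^ 2 ≤ (2 * (k : ℝ) + 1) ^ 2 := by
        push_cast; gcongr; linarith
    _ ≤ _ := pow_le_pow_right₀ (by linarith) (by omega)

lemma F_norm (e : ℕ) (p : ℕ × ℕ) : ‖F e p‖ = (-1) ^ p.1 * F e p := by
  have := T_nonneg p.2 p.1
  have h1 : ((-1 : ℝ) ^ p.1) * (-1) ^ p.1 = 1 := by rw [← mul_pow]; simp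
  unfold F
  rw [← mul_assoc ((-1 : ℝ) ^ p.1) ((-1 : ℝ) ^ p.1), h1, norm_mul, norm_pow]
  simp only [norm_neg, norm_one, one_pow, one_mul]
  exact Real.norm_of_nonneg (by positivity)

lemma F_summable (e : ℕ) : Summable (F e) := by
  apply Summable.of_norm
  rw [summable_prod_of_nonneg (fun p => norm_nonneg _)]
  have hk : ∀ k, HasSum (fun n => ‖F e (k, n)‖) (2 * (1 / (2 * (k : ℝ) + 1) ^ (2 * (e + 1)))) := by
    intro k
    simp_rw [F_norm]
    refine HasSum.congr_val ((F_hasSum_right e k).mul_left ((-1 : ℝ) ^ k)) ?_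
    have : ((-1 : ℝ) ^ k) * (-1) ^ k = 1 := by rw [← mul_pow]; simp
    linear_combination (-2 / (2 * (k : ℝ) + 1) ^ (2 * (e + 1))) * this
  refine ⟨fun k => (hk k).summable, ?_⟩
  simp_rw [fun k => (hk k).tsum_eq]
  exact beta_summable e

noncomputable def A (n : ℕ) : ℝ :=
  (4 : ℝ) ^ n / (Nat.choose (2 * n) n : ℝ) * (1 / (2 * (n : ℝ) + 1) ^ 2)

lemma A_nonneg (n : ℕ) : 0 ≤ A n := by unfold A; positivity

lemma A_B (e n k : ℕ) : A n * (B n k * (1 / (2 * (k : ℝ) + 1) ^ 2) ^ e) = F e (k, n) := by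
  have h0 : (Nat.choose (2 * n) n : ℝ) ≠ 0 := by
    exact_mod_cast (Nat.choose_pos (by omega)).ne'
  have h3 : (2 * (k : ℝ) + 1) ≠ 0 := by positivity
  unfold A B F T
  rw [show (16 : ℝ) = 4 * 4 by norm_num, mul_pow]
  simp only
  generalize (1 / (2 * (k : ℝ) + 1) ^ 2) ^ e = w
  field_simp

lemma F_hasSum_left (e n : ℕ) : HasSum (fun k => F e (k, n)) (A n * Hs e n) := by
  rw [Hs, Finset.mul_sum]
  simp_rw [A_B]
  apply hasSum_sum_of_ne_finset_zero
  intro k hk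
  rw [← A_B, B_zero (by simpa using hk)]; simp

lemma outer (e : ℕ) : HasSum (fun n => A n * Hs e n)
    (2 * ∑' k : ℕ, (-1 : ℝ) ^ k / (2 * (k : ℝ) + 1) ^ (2 * (e + 1))) := by
  have h := (F_summable e).hasSum
  have h1 := h.prod_fiberwise (F_hasSum_right e)
  have h2 := ((Equiv.prodComm ℕ ℕ).hasSum_iff.2 h).prod_fiberwise (F_hasSum_left e)
  rw [← tsum_mul_left, h1.tsum_eq]
  exact h2

lemma final (e : ℕ) :
    HasSum (fun x : {x : Fin (e + 1) → ℕ // Antitone x} =>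
      (4 : ℝ) ^ (x.1 0) / (Nat.choose (2 * x.1 0) (x.1 0) : ℝ) * wt x.1)
    (2 * ∑' k : ℕ, (-1 : ℝ) ^ k / (2 * (k : ℝ) + 1) ^ (2 * (e + 1))) := by
  rw [← (eqv e).hasSum_iff]
  have hf : ((fun x : {x : Fin (e + 1) → ℕ // Antitone x} =>
      (4 : ℝ) ^ (x.1 0) / (Nat.choose (2 * x.1 0) (x.1 0) : ℝ) * wt x.1) ∘ (eqv e)) =
      fun p => A p.1 * wt p.2.1 := by
    funext p
    simp only [Function.comp, eqv, Equiv.coe_fn_mk, wt_succ, Fin.cons_zero, Fin.tail_cons, A]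
    ring
  rw [hf]
  have hin : ∀ n, HasSum (fun y : {y // y ∈ S e n} => A n * wt y.1) (A n * Hs e n) := by
    intro n
    rw [← sum_S, Finset.mul_sum, ← Finset.sum_coe_sort]
    exact hasSum_fintype _
  have hs : Summable fun p : (Σ n : ℕ, {y // y ∈ S e n}) => A p.1 * wt p.2.1 := by
    rw [summable_sigma_of_nonneg]
    · refine ⟨fun n => (hin n).summable, ?_⟩
      simp_rw [fun n => (hin n).tsum_eq]
      exact (outer e).summable
    · intro p
      exact mul_nonneg (A_nonneg _) (Finset.prod_nonneg fun i _ => by positivity)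
  have h := hs.hasSum.sigma hin
  rw [(outer e).unique h]
  exact hs.hasSum

end BetaSum

/-- For `d ≥ 1`, the iterated sum over `n₁ ≥ ⋯ ≥ n_d ≥ 0` of
`4^{n₁} / (binom(2n₁,n₁) (2n₁+1)²⋯(2n_d+1)²)` equals `2β(2d)`,
where `β` is the Dirichlet beta function. -/
theorem stmt3 (d : ℕ) (hd : 1 ≤ d) :
    (∑' n : {n : Fin d → ℕ // Antitone n},
      ((4 : ℝ) ^ (n.1 ⟨0, hd⟩) /
        ((Nat.choose (2 * n.1 ⟨0, hd⟩) (n.1 ⟨0, hd⟩) : ℝ) *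
          ∏ j : Fin d, (2 * (n.1 j : ℝ) + 1) ^ 2))) =
    2 * ∑' k : ℕ, (-1 : ℝ) ^ k / (2 * (k : ℝ) + 1) ^ (2 * d) := by
  obtain ⟨e, rfl⟩ : ∃ e, d = e + 1 := ⟨d - 1, by omega⟩
  rw [← (BetaSum.final e).tsum_eq]
  refine tsum_congr fun x => ?_
  have h0 : (⟨0, hd⟩ : Fin (e + 1)) = 0 := rfl
  rw [h0, BetaSum.wt, Finset.prod_div_distrib, Finset.prod_const_one, div_mul_div_comm, mul_one]
end

section
/- For every integer d ≥ 1, the multiple t-star value t⋆(2,…,2) of depth d, i.e. the iterated sum over integers n₁ ≥ n₂ ≥ ⋯ ≥ n_d ≥ 1 of 1 / ((2n₁+1)²(2n₂+1)²⋯(2n_d+1)²) extended to n_d ≥ 0, namely ∑_{n₁ ≥ ⋯ ≥ n_d ≥ 0} ∏_{j=1}^d (2n_j+1)^{-2}, equals (4/π) β(2d+1), where β(s) = ∑_{k=0}^∞ (−1)^k/(2k+1)^s is the Dirichlet beta function. -/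
open Real

namespace TStar

noncomputable def x (k : ℕ) : ℝ := ((2 * (k : ℝ) + 1) ^ 2)⁻¹

noncomputable def w (M : ℕ) : ℝ :=
  ∏ i ∈ Finset.range M, (2 * (i : ℝ) + 3) ^ 2 / ((2 * (i : ℝ) + 2) * (2 * (i : ℝ) + 4))

noncomputable def C (M : ℕ) : ℕ → ℝ
  | 0 => w M
  | k + 1 => -((2 * (k : ℝ) + 1) * ((M : ℝ) - k) / ((2 * (k : ℝ) + 3) * ((M : ℝ) + k + 2))) * C M k

noncomputable def h : ℕ → ℕ → ℝ
  | 0, _ => 1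
  | d + 1, M => ∑ i ∈ Finset.range (M + 1), x i * h d i

lemma C_zero (M : ℕ) : C M 0 = w M := rfl

lemma C_succ (M k : ℕ) : C M (k + 1) =
    -((2 * (k : ℝ) + 1) * ((M : ℝ) - k) / ((2 * (k : ℝ) + 3) * ((M : ℝ) + k + 2))) * C M k := rfl

lemma C_step (M k : ℕ) : C (M + 1) k * (4 * ((M : ℝ) + 1 - k) * ((M : ℝ) + k + 2)) =
    (2 * (M : ℝ) + 3) ^ 2 * C M k := by
  induction k with
  | zero =>
    rw [C_zero, C_zero, w, w, Finset.prod_range_succ]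
    have h1 : (2 * (M : ℝ) + 2) ≠ 0 := by positivity
    have h2 : (2 * (M : ℝ) + 4) ≠ 0 := by positivity
    push_cast
    field_simp
    ring
  | succ k ih =>
    rw [C_succ, C_succ]
    have h1 : (2 * (k : ℝ) + 3) ≠ 0 := by positivity
    have h2 : ((M : ℝ) + k + 2) ≠ 0 := by positivity
    have h3 : ((M : ℝ) + 1 + k + 2) ≠ 0 := by positivity
    have e : C M k * (2 * (M : ℝ) + 3) ^ 2 / ((M : ℝ) + k + 2) =
        C (M + 1) k * (4 * ((M : ℝ) + 1 - k)) := by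
      rw [div_eq_iff h2]; linear_combination -ih
    push_cast
    calc _ = -((2 * (k : ℝ) + 1) * ((M : ℝ) - k) / (2 * (k : ℝ) + 3)) *
          (C (M + 1) k * (4 * ((M : ℝ) + 1 - k))) := by
          field_simp
          ring
      _ = _ := by
          rw [← e]
          field_simp

lemma C_gt (M k : ℕ) (hk : M < k) : C M k = 0 := by
  induction k with
  | zero => omega
  | succ k ih =>
    rw [C_succ]
    rcases Nat.lt_succ_iff_lt_or_eq.mp hk with h | h
    · rw [ih h, mul_zero]
    · subst h; simp

lemma sum_sq (M K : ℕ) : (M : ℝ) * ∑ k ∈ Finset.range (K + 1), (2 * (k : ℝ) + 1) ^ 2 * C M k =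
    (K + 1) * ((M : ℝ) - K) * (2 * K + 1) * C M K := by
  induction K with
  | zero => simp
  | succ K ih =>
    rw [Finset.sum_range_succ, mul_add, ih, C_succ]
    have h1 : (2 * (K : ℝ) + 3) ≠ 0 := by positivity
    have h2 : ((M : ℝ) + K + 2) ≠ 0 := by positivity
    push_cast
    field_simp
    ring

lemma x_pos (k : ℕ) : 0 < x k := by unfold x; positivity

lemma C_x (M k : ℕ) : C (M + 1) k * x k = C M k * x k + x (M + 1) * C (M + 1) k := by
  have := C_step M k
  unfold x
  have h1 : (2 * (k : ℝ) + 1) ≠ 0 := by positivity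
  have h2 : (2 * ((M + 1 : ℕ) : ℝ) + 1) ≠ 0 := by positivity
  field_simp
  push_cast
  linear_combination this

lemma sum_one (M : ℕ) : ∑ k ∈ Finset.range (M + 1), C M k = 1 := by
  induction M with
  | zero => simp [C_zero, w]
  | succ M ih =>
    have h0 : ∑ k ∈ Finset.range (M + 1 + 1), (2 * (k : ℝ) + 1) ^ 2 * C (M + 1) k = 0 := by
      have := sum_sq (M + 1) (M + 1)
      simp only [sub_self, mul_zero, zero_mul] at this
      rcases mul_eq_zero.mp this with h | h
      · exact absurd h (by positivity)
      · exact h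
    have e : ∀ k, C (M + 1) k = C M k + x (M + 1) * ((2 * (k : ℝ) + 1) ^ 2 * C (M + 1) k) := by
      intro k
      have := C_x M k
      have hx : x k * (2 * (k : ℝ) + 1) ^ 2 = 1 := by
        unfold x; exact inv_mul_cancel₀ (by positivity)
      linear_combination (2 * (k : ℝ) + 1) ^ 2 * this - (C (M + 1) k - C M k) * hx
    rw [Finset.sum_congr rfl (fun k _ => e k), Finset.sum_add_distrib, ← Finset.mul_sum, h0,
      Finset.sum_range_succ, ih, C_gt M (M + 1) (by omega)]
    simp

lemma h_eq (d M : ℕ) : h d M = ∑ k ∈ Finset.range (M + 1), C M k * x k ^ d := by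
  induction d generalizing M with
  | zero => simp [h, sum_one]
  | succ d ih =>
    induction M with
    | zero => simp [h, ih]; ring
    | succ M ihM =>
      have : h (d + 1) (M + 1) = h (d + 1) M + x (M + 1) * h d (M + 1) := by
        simp only [h]; rw [Finset.sum_range_succ]
      rw [this, ihM, ih]
      have e : ∑ k ∈ Finset.range (M + 1), C M k * x k ^ (d + 1) =
          ∑ k ∈ Finset.range (M + 1 + 1), C M k * x k ^ (d + 1) := by
        rw [Finset.sum_range_succ _ (M + 1), C_gt M (M + 1) (by omega)]; simp
      rw [e, Finset.mul_sum, ← Finset.sum_add_distrib]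
      refine Finset.sum_congr rfl fun k _ => ?_
      linear_combination -(x k ^ d) * C_x M k

lemma w_pos (M : ℕ) : 0 < w M := by
  unfold w; exact Finset.prod_pos fun i _ => by positivity

lemma w_W (M : ℕ) : w M * Real.Wallis.W M = (2 * (M : ℝ) + 1) / (M + 1) := by
  induction M with
  | zero => simp [w, Real.Wallis.W]
  | succ M ih =>
    rw [Real.Wallis.W_succ, w, Finset.prod_range_succ, ← w]
    have : w M * Real.Wallis.W M * ((2 * (M : ℝ) + 3) ^ 2 / ((2 * (M : ℝ) + 2) * (2 * (M : ℝ) + 4)) *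
      ((2 * M + 2) / (2 * M + 1) * ((2 * M + 2) / (2 * M + 3)))) =
        (2 * ((M + 1 : ℕ) : ℝ) + 1) / ((M + 1 : ℕ) + 1) := by
      rw [ih]
      push_cast
      have h1 : (2 * (M : ℝ) + 1) ≠ 0 := by positivity
      have h2 : (2 * (M : ℝ) + 2) ≠ 0 := by positivity
      have h3 : (2 * (M : ℝ) + 3) ≠ 0 := by positivity
      have h4 : (2 * (M : ℝ) + 4) ≠ 0 := by positivity
      have h5 : ((M : ℝ) + 1) ≠ 0 := by positivity
      have h6 : ((M : ℝ) + 1 + 1) ≠ 0 := by positivity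
      field_simp
      ring
    rw [← this]; ring

open Filter Topology

lemma tendsto_ratio (a b c : ℝ) :
    Tendsto (fun M : ℕ => (a * (M : ℝ) + b) / (M + c)) atTop (𝓝 a) := by
  have h1 : Tendsto (fun M : ℕ => (M : ℝ) + c) atTop atTop :=
    tendsto_atTop_add_const_right _ _ tendsto_natCast_atTop_atTop
  have h2 : Tendsto (fun M : ℕ => a + (b - a * c) / ((M : ℝ) + c)) atTop (𝓝 (a + 0)) :=
    tendsto_const_nhds.add (h1.const_div_atTop _)
  rw [add_zero] at h2
  refine h2.congr' ?_
  filter_upwards [h1.eventually_gt_atTop 0] with M hM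
  field_simp
  ring

lemma w_tendsto : Tendsto w atTop (𝓝 (4 / π)) := by
  have h1 := tendsto_ratio 2 1 1
  have h2 := h1.div Real.tendsto_prod_pi_div_two (by positivity)
  have e : (2 : ℝ) / (π / 2) = 4 / π := by field_simp; norm_num
  rw [e] at h2
  refine h2.congr fun M => ?_
  have := w_W M
  have hW := Real.Wallis.W_pos M
  simp only [Pi.div_apply]
  rw [← this]
  exact mul_div_cancel_right₀ _ hW.ne'

lemma C_tendsto (k : ℕ) :
    Tendsto (fun M => C M k) atTop (𝓝 (4 / π * ((-1) ^ k / (2 * (k : ℝ) + 1)))) := by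
  induction k with
  | zero => simpa [C_zero] using w_tendsto
  | succ k ih =>
    have h1 := (tendsto_ratio 1 (-k) (k + 2)).const_mul (-((2 * (k : ℝ) + 1) / (2 * (k : ℝ) + 3)))
    have h2 := h1.mul ih
    have e1 : (2 * (k : ℝ) + 1) ≠ 0 := by positivity
    have e2 : (2 * (k : ℝ) + 3) ≠ 0 := by positivity
    convert h2 using 2
    · rename_i M
      rw [C_succ]
      have e3 : ((M : ℝ) + k + 2) ≠ 0 := by positivity
      have e4 : ((M : ℝ) + (k + 2)) ≠ 0 := by positivity
      field_simp
      ring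
    · have e3 : (2 * ((k + 1 : ℕ) : ℝ) + 1) = 2 * (k : ℝ) + 3 := by push_cast; ring
      rw [e3, pow_succ]
      field_simp

lemma C_abs (M k : ℕ) : |C M k| ≤ w M := by
  induction k with
  | zero => rw [C_zero, abs_of_pos (w_pos M)]
  | succ k ih =>
    rcases lt_or_ge M (k + 1) with hk | hk
    · rw [C_gt M _ hk, abs_zero]; exact (w_pos M).le
    · rw [C_succ, abs_mul, abs_neg]
      have hk' : (k : ℝ) + 1 ≤ M := by exact_mod_cast hk
      have : |(2 * (k : ℝ) + 1) * ((M : ℝ) - k) / ((2 * (k : ℝ) + 3) * ((M : ℝ) + k + 2))| ≤ 1 := by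
        rw [abs_of_nonneg (div_nonneg (mul_nonneg (by positivity) (by linarith)) (by positivity))]
        rw [div_le_one (by positivity)]
        have : (0 : ℝ) ≤ k := by positivity
        apply mul_le_mul <;> linarith
      calc _ ≤ 1 * |C M k| := by gcongr
        _ ≤ w M := by rw [one_mul]; exact ih

lemma x_summable : Summable x := by
  have h1 : Summable (fun k : ℕ => (((k + 1 : ℕ) : ℝ) ^ 2)⁻¹) :=
    (summable_nat_add_iff 1).mpr (Real.summable_nat_pow_inv.mpr (by norm_num))
  refine Summable.of_nonneg_of_le (fun k => (x_pos k).le) (fun k => ?_) h1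
  unfold x
  gcongr
  push_cast
  have : (0 : ℝ) ≤ k := by positivity
  linarith

lemma x_le (k : ℕ) : x k ≤ 1 := by
  unfold x
  apply inv_le_one_of_one_le₀
  have : (0 : ℝ) ≤ k := by positivity
  nlinarith

lemma h_tendsto (d : ℕ) (hd : 1 ≤ d) : Tendsto (h d) atTop
    (𝓝 (4 / π * ∑' k : ℕ, (-1 : ℝ) ^ k / (2 * (k : ℝ) + 1) ^ (2 * d + 1))) := by
  obtain ⟨B, hB⟩ := w_tendsto.bddAbove_range
  have hB' : ∀ M, w M ≤ B := fun M => hB ⟨M, rfl⟩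
  have key := tendsto_tsum_of_dominated_convergence (𝓕 := atTop)
    (f := fun M k => C M k * x k ^ d)
    (g := fun k => 4 / π * ((-1) ^ k / (2 * (k : ℝ) + 1)) * x k ^ d)
    (bound := fun k => B * x k) (x_summable.mul_left B)
    (fun k => (C_tendsto k).mul_const _)
    (Eventually.of_forall fun M k => by
      rw [norm_mul, Real.norm_eq_abs, Real.norm_eq_abs, abs_of_pos (pow_pos (x_pos k) d)]
      have h1 := (C_abs M k).trans (hB' M)
      have h2 : x k ^ d ≤ x k := pow_le_of_le_one (x_pos k).le (x_le k) (by omega)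
      have := x_pos k
      exact mul_le_mul h1 h2 (by positivity) ((abs_nonneg _).trans h1))
  rw [← tsum_mul_left]
  convert key using 1
  · funext M
    rw [h_eq, tsum_eq_sum]
    intro k hk
    rw [C_gt M k (by simpa using hk), zero_mul]
  · congr 1
    refine tsum_congr fun k => ?_
    unfold x
    have e1 : (2 * (k : ℝ) + 1) ≠ 0 := by positivity
    rw [inv_pow, ← pow_mul, pow_succ]
    field_simp

/-- finite sets of bounded antitone tuples -/
noncomputable def S (d M : ℕ) : Finset (Fin d → ℕ) :=
  open Classical in
  (Fintype.piFinset fun _ : Fin d => Finset.range (M + 1)).filter Antitone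

lemma mem_S {d M : ℕ} {n : Fin d → ℕ} : n ∈ S d M ↔ (∀ j, n j ≤ M) ∧ Antitone n := by
  simp [S, Nat.lt_succ_iff]

lemma sum_S (d M : ℕ) : ∑ n ∈ S d M, ∏ j, x (n j) = h d M := by
  induction d generalizing M with
  | zero =>
    have : S 0 M = {Fin.elim0} := by
      ext n
      simp only [mem_S, Finset.mem_singleton]
      constructor
      · intro _; exact Subsingleton.elim _ _
      · rintro rfl
        exact ⟨fun j => j.elim0, fun j => j.elim0⟩
    rw [this]; simp [h]
  | succ d ih =>
    simp only [h]
    simp_rw [← ih, Finset.mul_sum]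
    rw [Finset.sum_sigma']
    refine Finset.sum_bij' (fun n _ => ⟨n 0, Fin.tail n⟩) (fun p _ => Fin.cons p.1 p.2)
      ?_ ?_ ?_ ?_ ?_
    · intro n hn
      rw [mem_S] at hn
      simp only [Finset.mem_sigma, Finset.mem_range, mem_S]
      refine ⟨Nat.lt_succ_of_le (hn.1 0), fun j => hn.2 (Fin.zero_le _), fun i j hij => ?_⟩
      exact hn.2 (Fin.succ_le_succ_iff.mpr hij)
    · rintro ⟨i, n⟩ hn
      simp only [Finset.mem_sigma, Finset.mem_range, mem_S] at hn
      obtain ⟨hi, hle, ha⟩ := hn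
      rw [mem_S]
      constructor
      · intro j
        refine Fin.cases ?_ (fun j => ?_) j
        · simp; omega
        · simp only [Fin.cons_succ]; have := hle j; omega
      · intro a b hab
        induction a using Fin.cases with
        | zero =>
          induction b using Fin.cases with
          | zero => exact le_rfl
          | succ b => simpa using hle b
        | succ a =>
          induction b using Fin.cases with
          | zero => exact absurd hab (by simp)
          | succ b => simpa using ha (Fin.succ_le_succ_iff.mp hab)
    · intro n _; exact Fin.cons_self_tail n
    · rintro ⟨i, n⟩ _; simp
    · intro n _
      rw [Fin.prod_univ_succ]; rfl

lemma S_mono (d : ℕ) : Monotone (S d) := by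
  intro a b hab n hn
  rw [mem_S] at *
  exact ⟨fun j => (hn.1 j).trans hab, hn.2⟩

end TStar

open TStar Filter Topology in
/-- For `d ≥ 1`, the multiple `t`-star value `t⋆(2,…,2)` of depth `d`, i.e.
`∑_{n₁ ≥ ⋯ ≥ n_d ≥ 0} ∏_{j=1}^d (2n_j+1)^{-2}`, equals `(4/π) β(2d+1)`,
where `β` is the Dirichlet beta function. -/
theorem stmt4 (d : ℕ) (hd : 1 ≤ d) :
    (∑' n : {n : Fin d → ℕ // Antitone n},
      ∏ j : Fin d, ((2 * (n.1 j : ℝ) + 1) ^ 2)⁻¹) =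
    (4 / π) * ∑' k : ℕ, (-1 : ℝ) ^ k / (2 * (k : ℝ) + 1) ^ (2 * d + 1) := by
  classical
  have hlim := h_tendsto d hd
  set L := (4 / π) * ∑' k : ℕ, (-1 : ℝ) ^ k / (2 * (k : ℝ) + 1) ^ (2 * d + 1)
  let f : {n : Fin d → ℕ // Antitone n} → ℝ := fun n => ∏ j, x (n.1 j)
  change ∑' n, f n = L
  have hf0 : ∀ n, 0 ≤ f n := fun n => Finset.prod_nonneg fun j _ => (x_pos _).le
  let T : ℕ → Finset {n : Fin d → ℕ // Antitone n} := fun M => (S d M).subtype _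
  have hT : ∀ M, ∑ n ∈ T M, f n = h d M := by
    intro M
    rw [← sum_S]
    exact Finset.sum_subtype_of_mem (fun n : Fin d → ℕ => ∏ j, x (n j))
      (fun n hn => (mem_S.mp hn).2)
  have hTm : Monotone T := fun a b hab => Finset.subtype_mono (S_mono d hab)
  have hTe : ∀ n, ∃ M, n ∈ T M := by
    intro n
    refine ⟨∑ j, n.1 j, ?_⟩
    rw [Finset.mem_subtype, mem_S]
    exact ⟨fun j => Finset.single_le_sum (fun i _ => Nat.zero_le (n.1 i)) (Finset.mem_univ j), n.2⟩
  have hTt : Tendsto T atTop atTop := tendsto_atTop_finset_of_monotone hTm hTe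
  have hmono : Monotone (h d) := by
    intro a b hab
    rw [← hT, ← hT]
    exact Finset.sum_le_sum_of_subset_of_nonneg (hTm hab) fun n _ _ => hf0 n
  have hs : Summable f := by
    refine summable_of_sum_le (c := L) hf0 fun u => ?_
    obtain ⟨M, hM⟩ := (hTt.eventually_ge_atTop u).exists
    calc _ ≤ ∑ n ∈ T M, f n := Finset.sum_le_sum_of_subset_of_nonneg hM fun n _ _ => hf0 n
      _ = h d M := hT M
      _ ≤ L := hmono.ge_of_tendsto hlim M
  have h1 := hs.hasSum.comp hTt
  refine tendsto_nhds_unique h1 (hlim.congr fun M => ?_)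
  exact (hT M).symm
end

section
/- For every integer d ≥ 1 and every real y with 0 < y < π/4, we have (1/(d−1)!) ∫_0^y (log(tan y · cot t))^{d−1} dt = Im(∑_{n=1}^∞ (i · tan y)^n / n^d). -/
open Real Complex

lemma aux_cot (t : ℝ) : Real.cot t = (Real.tan t)⁻¹ := by
  rw [Real.cot_eq_cos_div_sin, Real.tan_eq_sin_div_cos, inv_div]

lemma aux_int (m n : ℕ) : ∫ s in Set.Ioi (0:ℝ), s ^ m * Real.exp (-(((n:ℝ)+1) * s)) =
    (m.factorial : ℝ) / ((n:ℝ)+1) ^ (m+1) := by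
  have h := Real.integral_rpow_mul_exp_neg_mul_Ioi (a := (m:ℝ)+1) (r := (n:ℝ)+1)
    (by positivity) (by positivity)
  rw [Real.Gamma_nat_eq_factorial] at h
  simp only [add_sub_cancel_right, Real.rpow_natCast] at h
  rw [h]
  have : (1 / ((n:ℝ)+1)) ^ ((m:ℝ)+1) = (1 / ((n:ℝ)+1)) ^ (m+1) := by
    rw [← Real.rpow_natCast]; push_cast; rfl
  rw [this, one_div, inv_pow]
  field_simp

lemma aux_integrable (m n : ℕ) : MeasureTheory.IntegrableOn
    (fun s : ℝ => s ^ m * Real.exp (-(((n:ℝ)+1) * s))) (Set.Ioi 0) := by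
  by_contra h
  have h1 := aux_int m n
  rw [MeasureTheory.integral_undef h] at h1
  have : (0:ℝ) < (m.factorial : ℝ) / ((n:ℝ)+1) ^ (m+1) := by positivity
  linarith

lemma aux_image (y : ℝ) (hy0 : 0 < y) (hy : y < π / 4) :
    (fun s : ℝ => Real.arctan (Real.tan y * Real.exp (-s))) '' Set.Ioi 0 = Set.Ioo 0 y := by
  have hpi := Real.pi_pos
  have ha : 0 < Real.tan y := Real.tan_pos_of_pos_of_lt_pi_div_two hy0 (by linarith)
  have hay : Real.arctan (Real.tan y) = y := Real.arctan_tan (by linarith) (by linarith)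
  ext t
  constructor
  · rintro ⟨s, hs, rfl⟩
    have hs : 0 < s := hs
    refine ⟨Real.arctan_pos.2 (by positivity), ?_⟩
    have h1 : Real.exp (-s) < 1 := by rw [Real.exp_lt_one_iff]; linarith
    have h2 : Real.tan y * Real.exp (-s) < Real.tan y := by nlinarith
    have h3 := Real.arctan_strictMono h2
    rw [hay] at h3
    exact h3
  · rintro ⟨h0, h1⟩
    have ht : 0 < Real.tan t := Real.tan_pos_of_pos_of_lt_pi_div_two h0 (by linarith)
    have hlt : Real.tan t < Real.tan y :=
      Real.tan_lt_tan_of_lt_of_lt_pi_div_two (by linarith) (by linarith) h1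
    refine ⟨Real.log (Real.tan y / Real.tan t), ?_, ?_⟩
    · exact Real.log_pos ((one_lt_div ht).2 hlt)
    · simp only
      rw [Real.exp_neg, Real.exp_log (by positivity), inv_div, mul_div_cancel₀ _ ha.ne',
        Real.arctan_tan (by linarith) (by linarith)]

lemma aux_subst (m : ℕ) (y : ℝ) (hy0 : 0 < y) (hy : y < π / 4) :
    ∫ t in (0 : ℝ)..y, (Real.log (Real.tan y * Real.cot t)) ^ m =
    ∫ s in Set.Ioi (0:ℝ), s ^ m *
      (Real.tan y * Real.exp (-s) / (1 + (Real.tan y * Real.exp (-s)) ^ 2)) := by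
  have hpi := Real.pi_pos
  have ha : 0 < Real.tan y := Real.tan_pos_of_pos_of_lt_pi_div_two hy0 (by linarith)
  rw [intervalIntegral.integral_of_le hy0.le, MeasureTheory.integral_Ioc_eq_integral_Ioo,
    ← aux_image y hy0 hy]
  have hd : ∀ s ∈ Set.Ioi (0:ℝ), HasDerivWithinAt
      (fun s : ℝ => Real.arctan (Real.tan y * Real.exp (-s)))
      (1 / (1 + (Real.tan y * Real.exp (-s)) ^ 2) * (Real.tan y * (Real.exp (-s) * (-1))))
      (Set.Ioi 0) s := by
    intro s _
    exact ((((hasDerivAt_id s).neg).exp.const_mul (Real.tan y)).arctan).hasDerivWithinAt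
  rw [MeasureTheory.integral_image_eq_integral_abs_deriv_smul measurableSet_Ioi hd]
  · refine MeasureTheory.setIntegral_congr_fun measurableSet_Ioi ?_
    intro s _
    simp only [smul_eq_mul]
    rw [aux_cot, Real.tan_arctan]
    have e1 : Real.tan y * (Real.tan y * Real.exp (-s))⁻¹ = Real.exp s := by
      rw [Real.exp_neg]; field_simp
    rw [e1, Real.log_exp]
    have e2 : (1 / (1 + (Real.tan y * Real.exp (-s)) ^ 2) * (Real.tan y * (Real.exp (-s) * (-1))))
      = -(Real.tan y * Real.exp (-s) / (1 + (Real.tan y * Real.exp (-s)) ^ 2)) := by ring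
    rw [e2, abs_neg, abs_of_pos (by positivity), mul_comm]
  · intro s _ t _ h
    have h1 := Real.arctan_injective h
    have h2 := mul_left_cancel₀ ha.ne' h1
    have h3 := Real.exp_injective h2
    linarith

lemma aux_geom (x : ℝ) (h0 : 0 < x) (h1 : x < 1) :
    HasSum (fun n : ℕ => ((I * (x:ℂ)) ^ (n+1)).im) (x / (1 + x ^ 2)) := by
  have hn : ‖I * (x:ℂ)‖ < 1 := by simp [abs_of_pos h0, h1]
  have h := ((hasSum_geometric_of_norm_lt_one hn).mul_left (I * (x:ℂ)))
  have h2 := Complex.hasSum_im h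
  have e : (I * (x:ℂ) * (1 - I * (x:ℂ))⁻¹).im = x / (1 + x ^ 2) := by
    simp [Complex.inv_im, Complex.inv_re, Complex.normSq_apply]
    ring
  rw [e] at h2
  simpa only [pow_succ'] using h2

theorem stmt5 (d : ℕ) (hd : 1 ≤ d) (y : ℝ) (hy0 : 0 < y) (hy : y < π / 4) :
    (1 / ((d - 1).factorial : ℝ)) *
      ∫ t in (0 : ℝ)..y, (Real.log (Real.tan y * Real.cot t)) ^ (d - 1) =
    (∑' n : ℕ, (Complex.I * (Real.tan y : ℂ)) ^ (n + 1) / ((n : ℂ) + 1) ^ d).im := by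
  obtain ⟨m, rfl⟩ : ∃ m, d = m + 1 := ⟨d - 1, by omega⟩
  simp only [Nat.add_sub_cancel]
  rw [aux_subst m y hy0 hy]
  have hpi := Real.pi_pos
  have ha : 0 < Real.tan y := Real.tan_pos_of_pos_of_lt_pi_div_two hy0 (by linarith)
  have ha1 : Real.tan y < 1 := by
    rw [← Real.tan_pi_div_four]
    exact Real.tan_lt_tan_of_lt_of_lt_pi_div_two (by linarith) (by linarith) hy
  generalize Real.tan y = a at *
  have hz : ‖I * (a:ℂ)‖ = a := by simp [abs_of_pos ha]
  have hgs : Summable fun n : ℕ => a ^ (n+1) :=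
    (summable_nat_add_iff 1).2 (summable_geometric_of_lt_one ha.le ha1)
  have hden : ∀ n : ℕ, (1:ℝ) ≤ ((n:ℝ)+1)^(m+1) := fun n =>
    one_le_pow₀ (by have : (0:ℝ) ≤ n := n.cast_nonneg
                    linarith)
  have hle : ∀ n : ℕ, |((I * (a:ℂ)) ^ (n+1)).im| ≤ a ^ (n+1) := fun n => by
    refine (Complex.abs_im_le_norm _).trans ?_
    rw [norm_pow, hz]
  let F : ℕ → ℝ → ℝ := fun n s =>
    ((I * (a:ℂ)) ^ (n+1)).im * (s ^ m * Real.exp (-(((n:ℝ)+1) * s)))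
  have hF : ∀ n, MeasureTheory.Integrable (F n) (MeasureTheory.volume.restrict (Set.Ioi 0)) :=
    fun n => (aux_integrable m n).const_mul _
  have hnorm : ∀ n, ∫ s in Set.Ioi (0:ℝ), ‖F n s‖ =
      |((I * (a:ℂ)) ^ (n+1)).im| * ((m.factorial : ℝ) / ((n:ℝ)+1) ^ (m+1)) := by
    intro n
    rw [← aux_int, ← MeasureTheory.integral_const_mul]
    refine MeasureTheory.setIntegral_congr_fun measurableSet_Ioi ?_
    intro s hs
    have hs : 0 < s := hs
    simp only [F, norm_mul, Real.norm_eq_abs]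
    rw [abs_of_pos (pow_pos hs m), abs_of_pos (Real.exp_pos _)]
  have hsum : Summable fun n => ∫ s in Set.Ioi (0:ℝ), ‖F n s‖ := by
    simp only [hnorm]
    refine Summable.of_nonneg_of_le (fun n => by positivity) (fun n => ?_)
      (hgs.mul_right (m.factorial : ℝ))
    exact mul_le_mul (hle n) (div_le_self (by positivity) (hden n)) (by positivity) (by positivity)
  have key := MeasureTheory.hasSum_integral_of_summable_integral_norm hF hsum
  have hint : ∫ s in Set.Ioi (0:ℝ), ∑' n, F n s =
      ∫ s in Set.Ioi (0:ℝ), s ^ m * (a * Real.exp (-s) / (1 + (a * Real.exp (-s)) ^ 2)) := by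
    refine MeasureTheory.setIntegral_congr_fun measurableSet_Ioi ?_
    intro s hs
    have hs : 0 < s := hs
    have he : Real.exp (-s) < 1 := by rw [Real.exp_lt_one_iff]; linarith
    have hx1 : a * Real.exp (-s) < 1 := by nlinarith [Real.exp_pos (-s)]
    have h := (aux_geom (a * Real.exp (-s)) (by positivity) hx1).mul_left (s ^ m)
    refine Eq.trans ?_ h.tsum_eq
    refine tsum_congr fun n => ?_
    have e1 : Real.exp (-(((n:ℝ)+1) * s)) = Real.exp (-s) ^ (n+1) := by
      rw [← Real.exp_nat_mul]; push_cast; ring_nf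
    have e2 : (I * ((a * Real.exp (-s) : ℝ):ℂ)) ^ (n+1) =
        (I * (a:ℂ)) ^ (n+1) * ((Real.exp (-s) ^ (n+1) : ℝ) : ℂ) := by
      push_cast; rw [← mul_pow, mul_assoc]
    simp only [F]
    rw [e2, Complex.im_mul_ofReal, e1]
    ring
  rw [hint] at key
  have hFi : ∀ n, ∫ s in Set.Ioi (0:ℝ), F n s =
      ((I * (a:ℂ)) ^ (n+1)).im * ((m.factorial : ℝ) / ((n:ℝ)+1) ^ (m+1)) := by
    intro n
    rw [← aux_int, ← MeasureTheory.integral_const_mul]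
  simp only [hFi] at key
  have hcs : Summable fun n : ℕ => (I * (a : ℂ)) ^ (n + 1) / ((n : ℂ) + 1) ^ (m+1) := by
    refine Summable.of_norm_bounded hgs fun n => ?_
    have e : ‖((n:ℂ)+1)‖ = (n:ℝ)+1 := by
      have := Complex.norm_natCast (n+1)
      push_cast at this; exact this
    rw [norm_div, norm_pow, norm_pow, hz, e]
    exact div_le_self (by positivity) (hden n)
  rw [Complex.im_tsum hcs]
  rw [← (key.mul_left (1 / (m.factorial : ℝ))).tsum_eq]
  refine tsum_congr fun n => ?_
  have e : ((n:ℂ)+1)^(m+1) = ((((n:ℝ)+1)^(m+1) : ℝ) : ℂ) := by push_cast; rfl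
  rw [e, Complex.div_ofReal_im]
  have : (m.factorial : ℝ) ≠ 0 := by positivity
  field_simp
end

section
/- For every natural number n and every real y with −π/2 < y < π/2, we have ∑_{m ≥ n} 4^m (sin y)^{2m+1} / (binom(2m, m) · (2m+1)) = (4^n / (binom(2n, n) · cos y)) · ∫_0^y (sin t)^{2n} dt. -/
open Real

lemma four_pow_bd (m : ℕ) : (4 : ℝ) ^ m ≤ (2 * m + 1) * (Nat.choose (2 * m) m : ℝ) := by
  rcases Nat.eq_zero_or_pos m with rfl | h
  · simp
  · have h1 := Nat.four_pow_le_two_mul_self_mul_centralBinom m h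
    rw [Nat.centralBinom_eq_two_mul_choose] at h1
    have h2 : (4 : ℝ) ^ m ≤ 2 * m * (Nat.choose (2 * m) m : ℝ) := by exact_mod_cast h1
    have : (0 : ℝ) ≤ (Nat.choose (2 * m) m : ℝ) := by positivity
    linarith

lemma choose_pos' (m : ℕ) : (0 : ℝ) < (Nat.choose (2 * m) m : ℝ) := by
  exact_mod_cast Nat.choose_pos (by omega)

lemma int_bd (m : ℕ) (y : ℝ) (hy1 : -(π / 2) < y) (hy2 : y < π / 2) :
    |∫ t in (0 : ℝ)..y, Real.sin t ^ (2 * m)| ≤ (Real.sin y ^ 2) ^ m * |y| := by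
  have := intervalIntegral.norm_integral_le_of_norm_le_const (a := 0) (b := y)
    (f := fun t => Real.sin t ^ (2 * m)) (C := (Real.sin y ^ 2) ^ m) ?_
  · simpa using this
  · intro t ht
    have hab : |t| ≤ |y| := by
      have := Set.abs_sub_left_of_mem_uIcc (Set.uIoc_subset_uIcc ht)
      simpa using this
    have hy : |y| < π / 2 := abs_lt.2 ⟨hy1, hy2⟩
    have hc : Real.cos y ≤ Real.cos t := by
      rw [← Real.cos_abs y, ← Real.cos_abs t]
      exact Real.cos_le_cos_of_nonneg_of_le_pi (abs_nonneg _) (by linarith [Real.pi_pos]) hab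
    have hp := Real.cos_pos_of_mem_Ioo ⟨hy1, hy2⟩
    have h2 : Real.sin t ^ 2 ≤ Real.sin y ^ 2 := by
      rw [Real.sin_sq, Real.sin_sq]; nlinarith
    rw [pow_mul, Real.norm_eq_abs, abs_of_nonneg (by positivity)]
    gcongr

lemma step (m : ℕ) (y : ℝ) (hp : 0 < Real.cos y) :
    (4 : ℝ) ^ m * Real.sin y ^ (2 * m + 1) / ((Nat.choose (2 * m) m : ℝ) * (2 * (m : ℝ) + 1)) =
    ((4 : ℝ) ^ m / ((Nat.choose (2 * m) m : ℝ) * Real.cos y)) *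
      (∫ t in (0 : ℝ)..y, Real.sin t ^ (2 * m)) -
    ((4 : ℝ) ^ (m + 1) / ((Nat.choose (2 * (m + 1)) (m + 1) : ℝ) * Real.cos y)) *
      ∫ t in (0 : ℝ)..y, Real.sin t ^ (2 * (m + 1)) := by
  have h1 : ((m : ℝ) + 1) * (Nat.choose (2 * (m + 1)) (m + 1) : ℝ)
      = 2 * (2 * m + 1) * (Nat.choose (2 * m) m : ℝ) := by
    have := Nat.succ_mul_centralBinom_succ m
    simp only [Nat.centralBinom_eq_two_mul_choose] at this
    exact_mod_cast this
  have h2 : (Nat.choose (2 * (m + 1)) (m + 1) : ℝ)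
      = 2 * (2 * m + 1) * (Nat.choose (2 * m) m : ℝ) / ((m : ℝ) + 1) := by
    field_simp; linarith
  have hc := choose_pos' m
  rw [h2, show 2 * (m + 1) = 2 * m + 2 by ring, integral_sin_pow]
  generalize (∫ t in (0 : ℝ)..y, Real.sin t ^ (2 * m)) = I
  simp only [Real.sin_zero, pow_succ, mul_zero, zero_mul]
  push_cast
  have : (2 * (m : ℝ) + 2) ≠ 0 := by positivity
  field_simp
  ring

theorem stmt6 (n : ℕ) (y : ℝ) (hy1 : -(π / 2) < y) (hy2 : y < π / 2) :
    (∑' k : ℕ, (4 : ℝ) ^ (n + k) * Real.sin y ^ (2 * (n + k) + 1) /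
      ((Nat.choose (2 * (n + k)) (n + k) : ℝ) * (2 * (n + k : ℝ) + 1))) =
    ((4 : ℝ) ^ n / ((Nat.choose (2 * n) n : ℝ) * Real.cos y)) *
      ∫ t in (0 : ℝ)..y, Real.sin t ^ (2 * n) := by
  have hp := Real.cos_pos_of_mem_Ioo ⟨hy1, hy2⟩
  have hs0 : 0 ≤ Real.sin y ^ 2 := sq_nonneg _
  have hs1 : Real.sin y ^ 2 < 1 := by rw [Real.sin_sq]; nlinarith
  set a : ℕ → ℝ := fun m => (4 : ℝ) ^ m * Real.sin y ^ (2 * m + 1) /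
    ((Nat.choose (2 * m) m : ℝ) * (2 * (m : ℝ) + 1)) with ha
  set R : ℕ → ℝ := fun m => ((4 : ℝ) ^ m / ((Nat.choose (2 * m) m : ℝ) * Real.cos y)) *
      ∫ t in (0 : ℝ)..y, Real.sin t ^ (2 * m) with hR
  have hstep : ∀ m, a m = R m - R (m + 1) := fun m => step m y hp
  have hsum : Summable a := by
    refine Summable.of_norm_bounded (summable_geometric_of_lt_one hs0 hs1) (fun m => ?_)
    have hc := choose_pos' m
    have hb := four_pow_bd m
    have h1 : |Real.sin y ^ (2 * m + 1)| ≤ (Real.sin y ^ 2) ^ m := by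
      rw [pow_succ, pow_mul, abs_mul, abs_of_nonneg (by positivity)]
      exact mul_le_of_le_one_right (by positivity) (Real.abs_sin_le_one y)
    rw [ha, Real.norm_eq_abs, abs_div, abs_mul, abs_of_pos (by positivity : (0 : ℝ) < 4 ^ m),
      abs_of_pos (by positivity : 0 < (Nat.choose (2 * m) m : ℝ) * (2 * (m : ℝ) + 1)),
      div_le_iff₀ (by positivity)]
    calc _ ≤ ((2 * m + 1) * (Nat.choose (2 * m) m : ℝ)) * (Real.sin y ^ 2) ^ m := by gcongr
      _ = _ := by ring
  have hR0 : Filter.Tendsto R Filter.atTop (nhds 0) := by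
    have t1 := tendsto_self_mul_const_pow_of_lt_one hs0 hs1
    have t2 := tendsto_pow_atTop_nhds_zero_of_lt_one hs0 hs1
    have t3 := ((t1.const_mul 2).add t2).mul_const (|y| / Real.cos y)
    refine squeeze_zero_norm (fun m => ?_) (by simpa using t3)
    have hc := choose_pos' m
    have hb := four_pow_bd m
    have hi := int_bd m y hy1 hy2
    rw [hR, Real.norm_eq_abs, abs_mul, abs_of_pos (by positivity)]
    have h4 : (4 : ℝ) ^ m / ((Nat.choose (2 * m) m : ℝ) * Real.cos y) ≤ (2 * m + 1) / Real.cos y := by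
      rw [div_le_div_iff₀ (by positivity) hp]
      nlinarith
    calc _ ≤ (2 * m + 1) / Real.cos y * ((Real.sin y ^ 2) ^ m * |y|) := by gcongr
      _ = _ := by ring
  have hs' : Summable (fun k => a (n + k)) := by
    simpa [add_comm] using (summable_nat_add_iff n).2 hsum
  have hpart : ∀ N, ∑ k ∈ Finset.range N, a (n + k) = R n - R (n + N) := by
    intro N
    induction N with
    | zero => simp
    | succ N ih => rw [Finset.sum_range_succ, ih, hstep, ← add_assoc]; ring
  have hl : Filter.Tendsto (fun N => R n - R (n + N)) Filter.atTop (nhds (R n)) := by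
    have : Filter.Tendsto (fun N => R (n + N)) Filter.atTop (nhds 0) := by
      simpa [add_comm] using (Filter.tendsto_add_atTop_iff_nat n).2 hR0
    simpa using this.const_sub (R n)
  have ht := hs'.hasSum.tendsto_sum_nat
  simp only [hpart] at ht
  have := tendsto_nhds_unique ht hl
  simpa [ha, hR] using this
end

section
/- For every natural number n, we have ∫_0^{1/2} 4 t^{2n+1} / √(1 − 4t²) dt = 1 / (binom(2n, n) · (2n+1)). -/
open Real

lemma aux_sq {t : ℝ} (ht : t ∈ Set.Ioo (0 : ℝ) (1 / 2)) : 0 < 1 - 4 * t ^ 2 := by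
  obtain ⟨h1, h2⟩ := ht
  nlinarith

lemma aux_sqrt {t : ℝ} (ht : t ∈ Set.Ioo (0 : ℝ) (1 / 2)) :
    HasDerivAt (fun t : ℝ => Real.sqrt (1 - 4 * t ^ 2)) (-(4 * t) / Real.sqrt (1 - 4 * t ^ 2)) t := by
  have h := aux_sq ht
  have h1 : HasDerivAt (fun t : ℝ => 1 - 4 * t ^ 2) (-(8 * t)) t := by
    have := ((hasDerivAt_pow 2 t).const_mul 4).const_sub 1
    refine this.congr_deriv ?_
    norm_num
    ring
  have h2 := h1.sqrt h.ne'
  convert h2 using 1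
  have : Real.sqrt (1 - 4 * t ^ 2) ≠ 0 := (Real.sqrt_pos.2 h).ne'
  field_simp
  ring

lemma aux_prim (n : ℕ) : ∃ F : ℝ → ℝ, Continuous F ∧
    (∀ t ∈ Set.Ioo (0 : ℝ) (1 / 2),
      HasDerivAt F (4 * t ^ (2 * n + 1) / Real.sqrt (1 - 4 * t ^ 2)) t) ∧
    F (1 / 2) - F 0 = 1 / ((Nat.choose (2 * n) n : ℝ) * (2 * (n : ℝ) + 1)) := by
  induction n with
  | zero =>
    refine ⟨fun t => -Real.sqrt (1 - 4 * t ^ 2), by fun_prop, fun t ht => ?_, by norm_num⟩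
    refine (aux_sqrt ht).neg.congr_deriv ?_
    simp only [neg_div, neg_neg, mul_zero, zero_add, pow_one]
  | succ n ih =>
    obtain ⟨F, hF, hd, hv⟩ := ih
    refine ⟨fun t => ((2 * n + 2) * F t - 4 * (t ^ (2 * n + 2) * Real.sqrt (1 - 4 * t ^ 2)))
      / (8 * n + 12), by fun_prop, fun t ht => ?_, ?_⟩
    · have h := aux_sq ht
      have h3 := (((hd t ht).const_mul (2 * n + 2 : ℝ)).sub
        (((hasDerivAt_pow (2 * n + 2) t).mul (aux_sqrt ht)).const_mul 4)).div_const (8 * n + 12 : ℝ)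
      refine h3.congr_deriv ?_
      have hs : 0 < Real.sqrt (1 - 4 * t ^ 2) := Real.sqrt_pos.2 h
      have hs2 : Real.sqrt (1 - 4 * t ^ 2) ^ 2 = 1 - 4 * t ^ 2 := Real.sq_sqrt h.le
      generalize Real.sqrt (1 - 4 * t ^ 2) = s at *
      have hn : (8 * n + 12 : ℝ) ≠ 0 := by positivity
      rw [div_eq_div_iff hn hs.ne']
      have e : 2 * n + 2 - 1 = 2 * n + 1 := by omega
      rw [e]
      push_cast
      field_simp
      rw [hs2]
      ring
    · have hc : ((n : ℝ) + 1) * (Nat.choose (2 * (n + 1)) (n + 1) : ℝ)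
          = 2 * (2 * n + 1) * (Nat.choose (2 * n) n : ℝ) := by
        have := Nat.succ_mul_centralBinom_succ n
        simp only [Nat.centralBinom] at this
        exact_mod_cast this
      have hp : (0 : ℝ) < (Nat.choose (2 * n) n : ℝ) := by
        exact_mod_cast Nat.choose_pos (by omega)
      have hn : (0 : ℝ) < (n : ℝ) + 1 := by positivity
      have hc' : (Nat.choose (2 * (n + 1)) (n + 1) : ℝ)
          = 2 * (2 * n + 1) * (Nat.choose (2 * n) n : ℝ) / ((n : ℝ) + 1) := by
        rw [← hc]; field_simp
      have hs : Real.sqrt (1 - 4 * (1 / 2) ^ 2) = 0 := by norm_num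
      have hF2 : F (1 / 2) = F 0 + 1 / ((Nat.choose (2 * n) n : ℝ) * (2 * (n : ℝ) + 1)) := by
        linarith
      rw [hc']
      simp only [hs, hF2]
      push_cast
      rw [zero_pow (by omega)]
      have : (8 * n + 12 : ℝ) = 4 * (2 * (n + 1) + 1) := by ring
      rw [this]
      have h5 : (0 : ℝ) < 2 * (n + 1) + 1 := by positivity
      field_simp
      ring

/-- For every `n : ℕ`, `∫_0^{1/2} 4 t^{2n+1} / √(1 − 4t²) dt = 1/(binom(2n,n)(2n+1))`. -/
theorem stmt7 (n : ℕ) :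
    (∫ t in (0 : ℝ)..(1 / 2 : ℝ), 4 * t ^ (2 * n + 1) / Real.sqrt (1 - 4 * t ^ 2)) =
    1 / ((Nat.choose (2 * n) n : ℝ) * (2 * (n : ℝ) + 1)) := by
  obtain ⟨F, hF, hd, hv⟩ := aux_prim n
  rw [← hv]
  refine intervalIntegral.integral_eq_sub_of_hasDerivAt_of_le (by norm_num) hF.continuousOn hd ?_
  refine intervalIntegral.intervalIntegrable_deriv_of_nonneg hF.continuousOn (fun t ht => ?_)
    (fun t ht => ?_)
  · exact hd t (by simpa using ht)
  · have : 0 < t := by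
      have := ht.1
      simpa using this
    positivity
end

section
/- We have ∑_{n=0}^∞ 4^n / (binom(2n, n) · (2n+1)²) = 2G, where G = ∑_{k=0}^∞ (−1)^k/(2k+1)² is Catalan's constant. -/
open Real

noncomputable def cfA (n : ℕ) : ℝ := (4 : ℝ) ^ n / ((Nat.choose (2 * n) n : ℝ) * (2 * (n : ℝ) + 1))

lemma cfA_zero : cfA 0 = 1 := by simp [cfA]

lemma cfA_succ (n : ℕ) : (2 * (n : ℝ) + 3) * cfA (n + 1) = (2 * n + 2) * cfA n := by
  have h := Nat.succ_mul_centralBinom_succ n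
  simp only [Nat.centralBinom] at h
  have h' : ((n : ℝ) + 1) * (Nat.choose (2 * (n + 1)) (n + 1) : ℝ)
      = 2 * (2 * n + 1) * (Nat.choose (2 * n) n : ℝ) := by exact_mod_cast h
  have p1 : (0 : ℝ) < (Nat.choose (2 * (n + 1)) (n + 1) : ℝ) := by
    exact_mod_cast Nat.choose_pos (by omega)
  have p2 : (0 : ℝ) < (Nat.choose (2 * n) n : ℝ) := by
    exact_mod_cast Nat.choose_pos (by omega)
  unfold cfA
  push_cast
  generalize (Nat.choose (2 * (n + 1)) (n + 1) : ℝ) = X at *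
  generalize (Nat.choose (2 * n) n : ℝ) = Y at *
  have hn : (0 : ℝ) ≤ n := Nat.cast_nonneg n
  have e : (2 * ((n : ℝ) + 1) + 1) = 2 * n + 3 := by ring
  rw [e, pow_succ]
  have q1 : (2 * (n : ℝ) + 3) ≠ 0 := by positivity
  have q2 : (2 * (n : ℝ) + 1) ≠ 0 := by positivity
  field_simp
  linear_combination (-2) * h'

lemma cfA_pos (n : ℕ) : 0 < cfA n := by
  have p2 : (0 : ℝ) < (Nat.choose (2 * n) n : ℝ) := by
    exact_mod_cast Nat.choose_pos (by omega)
  unfold cfA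
  positivity

lemma cfA_le (n : ℕ) : cfA n ≤ 1 := by
  induction n with
  | zero => simp [cfA_zero]
  | succ n ih =>
    have h := cfA_succ n
    have hn : (0 : ℝ) ≤ n := Nat.cast_nonneg n
    have := cfA_pos n
    nlinarith

lemma summ_aux {r : ℝ} (h0 : 0 ≤ r) (h1 : r < 1) :
    Summable (fun n : ℕ => (2 * (n : ℝ) + 1) * r ^ (2 * n)) := by
  have hr : ‖r ^ 2‖ < 1 := by
    rw [Real.norm_of_nonneg (by positivity)]; nlinarith
  have s1 := summable_pow_mul_geometric_of_norm_lt_one 1 hr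
  have s0 := summable_pow_mul_geometric_of_norm_lt_one 0 hr
  refine ((s1.mul_left 2).add s0).congr ?_
  intro n
  simp [pow_mul]
  ring

lemma summ_d {c : ℕ → ℝ} (hc : ∀ n, |c n| ≤ 1) {x : ℝ} (hx : |x| < 1) :
    Summable (fun n : ℕ => (2 * (n : ℝ) + 1) * c n * x ^ (2 * n)) := by
  refine Summable.of_norm_bounded (summ_aux (abs_nonneg x) hx) ?_
  intro n
  rw [Real.norm_eq_abs, abs_mul, abs_mul, abs_pow, abs_of_nonneg (by positivity : (0 : ℝ) ≤ 2 * n + 1)]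
  have := hc n
  gcongr
  exact mul_le_of_le_one_right (by positivity) this

lemma summ_e {c : ℕ → ℝ} (hc : ∀ n, |c n| ≤ 1) {x : ℝ} (hx : |x| < 1) :
    Summable (fun n : ℕ => c n * x ^ (2 * n)) := by
  refine Summable.of_norm_bounded (summ_aux (abs_nonneg x) hx) ?_
  intro n
  rw [Real.norm_eq_abs, abs_mul, abs_pow]
  have := hc n
  gcongr
  have : (0 : ℝ) ≤ n := Nat.cast_nonneg n
  linarith

lemma summ_f {c : ℕ → ℝ} (hc : ∀ n, |c n| ≤ 1) {x : ℝ} (hx : |x| < 1) :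
    Summable (fun n : ℕ => c n * x ^ (2 * n + 1)) := by
  refine ((summ_e hc hx).mul_left x).congr ?_
  intro n
  ring

lemma deriv_ser {c : ℕ → ℝ} (hc : ∀ n, |c n| ≤ 1) {x : ℝ} (hx : |x| < 1) :
    HasDerivAt (fun y : ℝ => ∑' n : ℕ, c n * y ^ (2 * n + 1))
      (∑' n : ℕ, (2 * (n : ℝ) + 1) * c n * x ^ (2 * n)) x := by
  obtain ⟨r, hr1, hr2⟩ := exists_between hx
  have hr0 : 0 < r := lt_of_le_of_lt (abs_nonneg x) hr1
  refine hasDerivAt_tsum_of_isPreconnected (t := Metric.ball (0 : ℝ) r) (y₀ := 0)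
    (g := fun n y => c n * y ^ (2 * n + 1))
    (g' := fun n y => (2 * (n : ℝ) + 1) * c n * y ^ (2 * n))
    (summ_aux hr0.le hr2) Metric.isOpen_ball
    (convex_ball (0 : ℝ) r).isPreconnected ?_ ?_ (Metric.mem_ball_self hr0) ?_ ?_
  · intro n y hy
    have := (hasDerivAt_pow (2 * n + 1) y).const_mul (c n)
    refine HasDerivAt.congr_deriv this ?_
    push_cast
    ring
  · intro n y hy
    rw [mem_ball_zero_iff, Real.norm_eq_abs] at hy
    rw [Real.norm_eq_abs, abs_mul, abs_mul, abs_pow,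
      abs_of_nonneg (by positivity : (0 : ℝ) ≤ 2 * n + 1)]
    have := hc n
    gcongr
    exact mul_le_of_le_one_right (by positivity) this
  · simp
  · simpa using hr1

lemma cfA_abs (n : ℕ) : |cfA n| ≤ 1 := by
  rw [abs_of_pos (cfA_pos n)]; exact cfA_le n

lemma ode {x : ℝ} (hx : |x| < 1) :
    (1 - x ^ 2) * (∑' n : ℕ, (2 * (n : ℝ) + 1) * cfA n * x ^ (2 * n))
      = 1 + x * ∑' n : ℕ, cfA n * x ^ (2 * n + 1) := by
  have sd := summ_d cfA_abs hx
  have sf := summ_f cfA_abs hx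
  have e1 := sd.tsum_eq_zero_add
  have sd' := (summable_nat_add_iff 1).2 sd
  have e2 : (∑' n : ℕ, (2 * ((n + 1 : ℕ) : ℝ) + 1) * cfA (n + 1) * x ^ (2 * (n + 1)))
      = x ^ 2 * (∑' n : ℕ, (2 * (n : ℝ) + 1) * cfA n * x ^ (2 * n))
        + x * ∑' n : ℕ, cfA n * x ^ (2 * n + 1) := by
    rw [← tsum_mul_left, ← tsum_mul_left, ← (sd.mul_left _).tsum_add (sf.mul_left _)]
    refine tsum_congr fun n => ?_
    have h := cfA_succ n
    push_cast
    linear_combination x ^ (2 * n + 2) * h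
  rw [e2] at e1
  simp only [cfA_zero, Nat.cast_zero, mul_zero, pow_zero] at e1
  linear_combination e1

lemma s_abs {t : ℝ} (ht : |t| < 1) : |2 * t / (1 + t ^ 2)| < 1 := by
  rw [abs_lt] at *
  have hp : 0 < 1 + t ^ 2 := by positivity
  constructor
  · rw [lt_div_iff₀ hp]; nlinarith
  · rw [div_lt_one hp]; nlinarith

lemma s_deriv (t : ℝ) : HasDerivAt (fun t : ℝ => 2 * t / (1 + t ^ 2))
    (2 * (1 - t ^ 2) / (1 + t ^ 2) ^ 2) t := by
  have hp : 1 + t ^ 2 ≠ 0 := by positivity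
  have h1 : HasDerivAt (fun t : ℝ => 2 * t) 2 t := by
    simpa using (hasDerivAt_id t).const_mul 2
  have h2 : HasDerivAt (fun t : ℝ => 1 + t ^ 2) (2 * t) t := by
    simpa using (hasDerivAt_pow 2 t).const_add 1
  refine HasDerivAt.congr_deriv (h1.div h2 hp) ?_
  congr 1
  ring

lemma c_deriv (t : ℝ) : HasDerivAt (fun t : ℝ => (1 - t ^ 2) / (1 + t ^ 2))
    (- 4 * t / (1 + t ^ 2) ^ 2) t := by
  have hp : 1 + t ^ 2 ≠ 0 := by positivity
  have h1 : HasDerivAt (fun t : ℝ => 1 - t ^ 2) (-(2 * t)) t := by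
    simpa using (hasDerivAt_pow 2 t).const_sub 1
  have h2 : HasDerivAt (fun t : ℝ => 1 + t ^ 2) (2 * t) t := by
    simpa using (hasDerivAt_pow 2 t).const_add 1
  refine HasDerivAt.congr_deriv (h1.div h2 hp) ?_
  congr 1
  ring

lemma zero_of_deriv {f : ℝ → ℝ} (h0 : f 0 = 0)
    (hf : ∀ t, |t| < 1 → HasDerivAt f 0 t) {t : ℝ} (ht : |t| < 1) : f t = 0 := by
  have ho : IsOpen (Metric.ball (0 : ℝ) 1) := Metric.isOpen_ball
  rw [← h0]
  refine ho.is_const_of_deriv_eq_zero (convex_ball (0 : ℝ) 1).isPreconnected ?_ ?_ ?_ ?_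
  · intro y hy
    exact (hf y (by simpa using hy)).differentiableAt.differentiableWithinAt
  · intro y hy
    exact (hf y (by simpa using hy)).deriv
  · simpa using ht
  · simp

lemma stepA {t : ℝ} (ht : |t| < 1) :
    (∑' n : ℕ, cfA n * (2 * t / (1 + t ^ 2)) ^ (2 * n + 1)) * ((1 - t ^ 2) / (1 + t ^ 2))
      = 2 * arctan t := by
  have key := zero_of_deriv (f := fun t => (∑' n : ℕ, cfA n * (2 * t / (1 + t ^ 2)) ^ (2 * n + 1)) *
    ((1 - t ^ 2) / (1 + t ^ 2)) - 2 * arctan t) (by simp) ?_ ht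
  · exact sub_eq_zero.1 key
  · intro t ht
    have hs := s_abs ht
    have hd := (deriv_ser cfA_abs hs).comp t (s_deriv t)
    have := (hd.mul (c_deriv t)).sub ((hasDerivAt_arctan t).const_mul 2)
    refine HasDerivAt.congr_deriv this ?_
    have ho := ode hs
    simp only [Function.comp]
    generalize (∑' n : ℕ, (2 * (n : ℝ) + 1) * cfA n * (2 * t / (1 + t ^ 2)) ^ (2 * n)) = D at *
    generalize (∑' n : ℕ, cfA n * (2 * t / (1 + t ^ 2)) ^ (2 * n + 1)) = Y at *
    have hp : 1 + t ^ 2 ≠ 0 := by positivity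
    have e : D * (2 * (1 - t ^ 2) / (1 + t ^ 2) ^ 2) * ((1 - t ^ 2) / (1 + t ^ 2)) +
        Y * (-4 * t / (1 + t ^ 2) ^ 2) - 2 * (1 / (1 + t ^ 2)) =
        2 / (1 + t ^ 2) * ((1 - (2 * t / (1 + t ^ 2)) ^ 2) * D - (1 + 2 * t / (1 + t ^ 2) * Y)) := by
      field_simp
      ring
    rw [e, ho]; ring

noncomputable def cfB (n : ℕ) : ℝ := cfA n / (2 * n + 1)
noncomputable def cfC (n : ℕ) : ℝ := (-1) ^ n / (2 * (n : ℝ) + 1) ^ 2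

lemma cfB_pos (n : ℕ) : 0 < cfB n := by
  have := cfA_pos n
  unfold cfB; positivity

lemma cfB_abs (n : ℕ) : |cfB n| ≤ 1 := by
  rw [abs_of_pos (cfB_pos n)]
  unfold cfB
  have hn : (0 : ℝ) ≤ n := Nat.cast_nonneg n
  rw [div_le_one (by positivity)]
  linarith [cfA_le n]

lemma cfC_abs' (n : ℕ) : |cfC n| = 1 / (2 * (n : ℝ) + 1) ^ 2 := by
  unfold cfC
  rw [abs_div, abs_pow, abs_neg, abs_one, one_pow, abs_of_nonneg (by positivity)]

lemma cfC_abs (n : ℕ) : |cfC n| ≤ 1 := by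
  rw [cfC_abs']
  have hn : (0 : ℝ) ≤ n := Nat.cast_nonneg n
  rw [div_le_one (by positivity)]
  nlinarith

lemma cfC_summ : Summable (fun n => |cfC n|) := by
  have h : Summable (fun n : ℕ => 1 / ((n : ℝ) + 1) ^ 2) := by
    have := (summable_nat_add_iff 1).2 (Real.summable_one_div_nat_pow.2 (by norm_num : 1 < 2))
    simpa using this
  refine Summable.of_nonneg_of_le (fun n => abs_nonneg _) (fun n => ?_) h
  rw [cfC_abs']
  have hn : (0 : ℝ) ≤ n := Nat.cast_nonneg n
  gcongr
  linarith

lemma stepB {t : ℝ} (ht : |t| < 1) :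
    (∑' n : ℕ, cfB n * (2 * t / (1 + t ^ 2)) ^ (2 * n + 1))
      = 2 * ∑' n : ℕ, cfC n * t ^ (2 * n + 1) := by
  have key := zero_of_deriv (f := fun t => (∑' n : ℕ, cfB n * (2 * t / (1 + t ^ 2)) ^ (2 * n + 1))
    - 2 * ∑' n : ℕ, cfC n * t ^ (2 * n + 1)) (by simp) ?_ ht
  · exact sub_eq_zero.1 key
  · intro t ht
    have hs := s_abs ht
    have hd := (deriv_ser cfB_abs hs).comp t (s_deriv t)
    have := hd.sub ((deriv_ser cfC_abs ht).const_mul 2)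
    refine HasDerivAt.congr_deriv this ?_
    rcases eq_or_ne t 0 with rfl | h0
    · have e1 : ∀ c : ℕ → ℝ, (∑' n : ℕ, (2 * (n : ℝ) + 1) * c n * (0 : ℝ) ^ (2 * n)) = c 0 := by
        intro c
        rw [tsum_eq_single 0]
        · simp
        · intro n hn
          simp [hn]
      have e2 : (2 * (0 : ℝ) / (1 + 0 ^ 2)) = 0 := by simp
      rw [e2, e1, e1]
      simp [cfB, cfC, cfA_zero]
    · have hp : 1 + t ^ 2 ≠ 0 := by positivity
      have hA := stepA ht
      have hB : (2 * t / (1 + t ^ 2)) * (∑' n : ℕ, (2 * (n : ℝ) + 1) * cfB n * (2 * t / (1 + t ^ 2)) ^ (2 * n))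
          = ∑' n : ℕ, cfA n * (2 * t / (1 + t ^ 2)) ^ (2 * n + 1) := by
        rw [← tsum_mul_left]
        refine tsum_congr fun n => ?_
        have q2 : (2 * (n : ℝ) + 1) ≠ 0 := by positivity
        have : (2 * (n : ℝ) + 1) * cfB n = cfA n := by
          unfold cfB; field_simp
        rw [this]; ring
      have hC : t * (∑' n : ℕ, (2 * (n : ℝ) + 1) * cfC n * t ^ (2 * n)) = arctan t := by
        rw [← (Real.hasSum_arctan (x := t) (by simpa using ht)).tsum_eq, ← tsum_mul_left]
        refine tsum_congr fun n => ?_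
        have q2 : (2 * (n : ℝ) + 1) ≠ 0 := by positivity
        unfold cfC
        push_cast
        field_simp
        ring
      rw [← hB, ← hC] at hA
      generalize (∑' n : ℕ, (2 * (n : ℝ) + 1) * cfB n * (2 * t / (1 + t ^ 2)) ^ (2 * n)) = X at *
      generalize (∑' n : ℕ, (2 * (n : ℝ) + 1) * cfC n * t ^ (2 * n)) = Z at *
      refine mul_left_cancel₀ h0 ?_
      have e : t * (X * (2 * (1 - t ^ 2) / (1 + t ^ 2) ^ 2) - 2 * Z) =
        2 * t / (1 + t ^ 2) * X * ((1 - t ^ 2) / (1 + t ^ 2)) - 2 * (t * Z) := by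
        field_simp
      rw [e, hA]; ring

open Filter Topology in
lemma lim_ser {c : ℕ → ℝ} (hc : Summable (fun n => |c n|)) {u : ℝ → ℝ}
    (hu : Tendsto u (𝓝[<] 1) (𝓝 1)) (hu1 : ∀ t, |t| < 1 → |u t| < 1) :
    Tendsto (fun t => ∑' n : ℕ, c n * (u t) ^ (2 * n + 1)) (𝓝[<] 1) (𝓝 (∑' n, c n)) := by
  refine tendsto_tsum_of_dominated_convergence hc ?_ ?_
  · intro n
    simpa using (hu.pow (2 * n + 1)).const_mul (c n)
  · have : Set.Ioo (-1 : ℝ) 1 ∈ 𝓝[<] (1 : ℝ) := Ioo_mem_nhdsLT (by norm_num)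
    filter_upwards [this] with t ht n
    rw [Real.norm_eq_abs, abs_mul, abs_pow]
    exact mul_le_of_le_one_right (abs_nonneg _)
      (pow_le_one₀ (abs_nonneg _) (hu1 t (abs_lt.2 ht)).le)

open Filter Topology in
lemma s_lim : Tendsto (fun t : ℝ => 2 * t / (1 + t ^ 2)) (𝓝[<] 1) (𝓝 1) := by
  have h := (s_deriv 1).continuousAt.tendsto
  norm_num at h
  exact h.mono_left nhdsWithin_le_nhds

open Filter Topology in
lemma cfB_summ : Summable cfB := by
  refine summable_of_sum_range_le (c := 2 * ∑' n, |cfC n|) (fun n => (cfB_pos n).le) ?_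
  intro N
  have hl : Tendsto (fun t : ℝ => ∑ n ∈ Finset.range N, cfB n * (2 * t / (1 + t ^ 2)) ^ (2 * n + 1))
      (𝓝[<] 1) (𝓝 (∑ n ∈ Finset.range N, cfB n)) := by
    refine tendsto_finsetSum _ fun n _ => ?_
    simpa using (s_lim.pow (2 * n + 1)).const_mul (cfB n)
  refine le_of_tendsto hl ?_
  have : Set.Ioo (0 : ℝ) 1 ∈ 𝓝[<] (1 : ℝ) := Ioo_mem_nhdsLT (by norm_num)
  filter_upwards [this] with t ht
  have ht0 := ht.1
  have ht' : |t| < 1 := abs_lt.2 ⟨by linarith [ht.1], ht.2⟩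
  calc _ ≤ ∑' n : ℕ, cfB n * (2 * t / (1 + t ^ 2)) ^ (2 * n + 1) := by
        refine (summ_f cfB_abs (s_abs ht')).sum_le_tsum _ fun n _ => ?_
        have := cfB_pos n
        positivity
    _ = 2 * ∑' n : ℕ, cfC n * t ^ (2 * n + 1) := stepB ht'
    _ ≤ _ := by
        gcongr ?_ * ?_
        refine (summ_f cfC_abs ht').tsum_le_tsum (fun n => ?_) cfC_summ
        refine (le_abs_self _).trans ?_
        rw [abs_mul, abs_pow]
        exact mul_le_of_le_one_right (abs_nonneg _) (pow_le_one₀ (abs_nonneg _) ht'.le)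

open Filter Topology in
lemma main_aux : ∑' n, cfB n = 2 * ∑' n, cfC n := by
  have h1 := lim_ser (c := cfB) cfB_summ.abs s_lim (fun t ht => s_abs ht)
  have h2 := (lim_ser (c := cfC) cfC_summ (u := fun t => t)
    (tendsto_id.mono_left nhdsWithin_le_nhds) (fun t ht => ht)).const_mul 2
  refine tendsto_nhds_unique h1 (h2.congr' ?_)
  have : Set.Ioo (-1 : ℝ) 1 ∈ 𝓝[<] (1 : ℝ) := Ioo_mem_nhdsLT (by norm_num)
  filter_upwards [this] with t ht
  exact (stepB (abs_lt.2 ht)).symm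

/-- `∑_{n≥0} 4^n / (binom(2n,n) (2n+1)²) = 2G`, `G` Catalan's constant. -/
theorem stmt8 :
    (∑' n : ℕ, (4 : ℝ) ^ n / ((Nat.choose (2 * n) n : ℝ) * (2 * (n : ℝ) + 1) ^ 2)) =
    2 * ∑' k : ℕ, (-1 : ℝ) ^ k / (2 * (k : ℝ) + 1) ^ 2 := by
  have h := main_aux
  unfold cfC at h
  rw [← h]
  refine tsum_congr fun n => ?_
  unfold cfB cfA
  rw [div_div]
  congr 1
  ring
end
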